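/- For the family C_m of lifted extended quadratic residue codes of length 24 modulo 3^m, let A_{2,1} := 3^{−12}·swe_{C_3}(x_0, x_1, z−y_0, z+2y_0) ∈ ℚ[x_0,x_1,y_0,z]. Then the sum of those monomials of A_{2,1} that are divisible by x_0·y_0 equals D_{2,1} = 72864·x_0^9·y_0^9·(−x_1^2·z^4 + x_1^3·z^3 + x_1^5·z − x_1^6 − x_0^3·z^3 + 3·x_0^3·x_1·z^2 − 3·x_0^3·x_1^2·z + x_0^3·x_1^3 − x_1^3·y_0^3). -/

import Mathlib

/-!
The enumerator is computed by a Fourier expansion of the substitution `z - y`, `z + 2 y`.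

*Reduction to an explicit code.* `X ^ 23 - 1` has two Hensel factors of degree `11` modulo `27`, and
reversing the coordinates exchanges them. So up to a coordinate permutation the code is the explicit
code `InCode 27` with generator matrix `[I | A]` (`exists_perm`). It is self-dual for a diagonal form
with unit weights (`form_eq_zero`, `inCode_of_form`), and the permutations `j ↦ j + 1`, `j ↦ 2 j`,
`j ↦ -1/j` of the projective line over `ℤ/23ℤ` lift to monomial automorphisms.

*Fourier expansion.* On `9ℤ/27ℤ` the function with value `z + 2 y` at `0` and `z - y` elsewhere is
`z + y (χ + χ⁻¹)` for a nontrivial character `χ`. Hence the enumerator `WW` is a sum over ternary words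
`u` of terms `VV u`, which are homogeneous of degree `wt u` in `y`. Translation by `9 v`, for `v` in
the code, shows that `VV u = 0` unless `u` lies in the ternary code (`WW_eq`). Only the words `c`
divisible by `9` on the support of `u` contribute to `VV u`, and the degree in `x₀` of their
contribution is the weight of `c` modulo `3`. Thus a component of bidegree `(i, j)` in `(x₀, y)`
requires two ternary codewords of weights `i` and `j` with disjoint supports. Weights are divisible
by `3` and the minimum weight is `9` (`nine_le_wt`), so only the bidegrees `(9, 9)`, `(12, 9)`,
`(15, 9)`, `(9, 12)`, `(9, 15)` and `(12, 12)` remain (`bidegrees`).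

*Degree nine in `y`.* The `4048` words of weight nine form one orbit under the automorphisms
(`orb_of_wt`, `card_wt_nine`), and `VV` is constant on it. For one representative, the words modulo
`9` vanishing on its support are enumerated (`comp_rep_9`, `comp_rep_12`, `comp_rep_15`).

*Degree nine in `x₀`.* The MacWilliams identity for the self-dual code exchanges the degrees in `x₀`
and `y` (`mac_comp_WW`), so `(9, 12)` and `(9, 15)` follow from `(12, 9)` and `(15, 9)`.

*Bidegree `(12, 12)`.* Here `u` and `b = c mod 3` have complementary supports, and `u + b`, `u - b`
are ternary codewords without zero coordinate. If `P` and `Q` are lifts of these to the code,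
orthogonality of `P + Q` and `c` forces `∑ (Q_j² - P_j²) ≡ 0` modulo `9`, the sum being over the zeros
of `u`. A check of all pairs of the `48` words of full weight excludes this (`no_pair`).

The finite searches are evaluated by the kernel on words packed into natural numbers.
-/

open MvPolynomial
open scoped Classical

noncomputable section

/-- The symmetrized weight enumerator of a code `C ⊆ (ℤ/Nℤ)^n` (for `N = p^m`):
the variable `X i` for `i < m` records the number of coordinates of `p`-adic valuation `i`,
and the last variable `X m` (the variable `z`) records the number of zero coordinates. -/
def swe (p m : ℕ) {N n : ℕ} [NeZero N]
    (C : Submodule (ZMod N) (Fin n → ZMod N)) : MvPolynomial (Fin (m + 1)) ℚ :=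
  ∑ c : Fin n → ZMod N, if c ∈ C then
      (∏ i : Fin m, (X (Fin.castSucc i) : MvPolynomial (Fin (m + 1)) ℚ) ^
          (Finset.univ.filter fun j => c j ≠ 0 ∧ padicValNat p (c j).val = (i : ℕ)).card)
        * (X (Fin.last m) : MvPolynomial (Fin (m + 1)) ℚ) ^
            (Finset.univ.filter fun j => c j = 0).card
    else 0

/-- `g` is a monic irreducible degree-11 factor of `x^23 - 1` over `ℤ/pℤ`. -/
def IsQRFactor (p : ℕ) (g : Polynomial (ZMod p)) : Prop :=
  g.Monic ∧ g.natDegree = 11 ∧ Irreducible g ∧ g ∣ (Polynomial.X ^ 23 - 1)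

/-- `gm` is the (Hensel) lift of `g` to `ℤ/Nℤ` and `C` is the associated lifted extended
cyclic quadratic residue code of length 24: the extension by an overall parity check of the
cyclic code of length 23 generated by `gm`. -/
def IsLiftedQR {p N : ℕ} (hpN : p ∣ N) (g : Polynomial (ZMod p)) (gm : Polynomial (ZMod N))
    (C : Submodule (ZMod N) (Fin 24 → ZMod N)) : Prop :=
  gm.Monic ∧ gm.natDegree = 11 ∧ gm ∣ (Polynomial.X ^ 23 - 1) ∧
    gm.map (ZMod.castHom hpN (ZMod p)) = g ∧
    ∀ c : Fin 24 → ZMod N, c ∈ C ↔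
      ((∃ f : Polynomial (ZMod N), ∀ j : Fin 23,
          c (Fin.castSucc j) = ((f * gm) %ₘ (Polynomial.X ^ 23 - 1)).coeff (j : ℕ)) ∧
        c (Fin.last 23) = - ∑ j : Fin 23, c (Fin.castSucc j))

/-- The sum of those monomials of `A` that are divisible by `X i * X j`. -/
def divPart {σ : Type*} (A : MvPolynomial σ ℚ) (i j : σ) : MvPolynomial σ ℚ :=
  ∑ d ∈ A.support.filter (fun d => d i ≠ 0 ∧ d j ≠ 0), monomial d (A.coeff d)

/-! ### The code in systematic form -/

/-- The block `A` of the systematic generator matrix `[I | A]` over `ℤ/27ℤ`. -/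
def tabA : List (List ℕ) :=
  [
   [26, 12, 15, 4, 18, 4, 0, 11, 23, 10, 13, 25],
   [13, 5, 6, 17, 13, 20, 4, 19, 9, 1, 3, 24],
   [3, 4, 14, 21, 17, 1, 20, 25, 4, 6, 16, 3],
   [16, 0, 7, 4, 3, 7, 1, 6, 8, 6, 14, 8],
   [14, 10, 6, 5, 22, 1, 7, 9, 8, 3, 13, 9],
   [13, 20, 4, 8, 14, 24, 1, 26, 7, 13, 23, 8],
   [23, 7, 26, 20, 26, 3, 24, 18, 10, 20, 11, 0],
   [11, 26, 4, 9, 11, 9, 3, 11, 8, 8, 12, 22],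
   [12, 2, 8, 10, 9, 17, 9, 6, 5, 23, 14, 19],
   [14, 6, 8, 6, 1, 7, 17, 17, 8, 0, 3, 20],
   [3, 5, 15, 23, 6, 16, 7, 11, 2, 5, 15, 26],
   [15, 12, 23, 9, 23, 0, 16, 4, 17, 14, 26, 2]]

/-- The entry `A i k`, as a natural number. -/
def entA (i k : Fin 12) : ℕ := (tabA.getD i []).getD k 0

/-- Weights of the diagonal form for which the code is self-dual: the last coordinate gets
`-1/23 = 7` modulo `27`, all other coordinates get `1`. -/
def eps (k : Fin 12) : ℕ := if k = 11 then 7 else 1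

/-- The `i`-th of the first twelve coordinates. -/
def lft (i : Fin 12) : Fin 24 := ⟨i, by omega⟩

/-- The `k`-th of the last twelve coordinates. -/
def rgt (k : Fin 12) : Fin 24 := ⟨12 + k, by omega⟩

/-- Membership in the code over `ℤ/Nℤ` with generator matrix `[I | A]`. -/
def InCode (N : ℕ) (c : Fin 24 → ZMod N) : Prop :=
  ∀ k, c (rgt k) = ∑ i, c (lft i) * (entA i k : ZMod N)

/-- The diagonal bilinear form with weights `1, …, 1, 7`. -/
def form (N : ℕ) (c d : Fin 24 → ZMod N) : ZMod N :=
  ∑ i, c (lft i) * d (lft i) + ∑ k, (eps k : ZMod N) * c (rgt k) * d (rgt k)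

lemma sum24 {M : Type*} [AddCommMonoid M] (f : Fin 24 → M) :
    ∑ j, f j = ∑ i, f (lft i) + ∑ k, f (rgt k) := by
  exact Fin.sum_univ_add (M := M) (a := 12) (b := 12) f

lemma forall24 {P : Fin 24 → Prop} (h1 : ∀ i, P (lft i)) (h2 : ∀ k, P (rgt k)) : ∀ j, P j := by
  intro j
  by_cases hj : (j : ℕ) < 12
  · exact h1 ⟨j, hj⟩
  · have := h2 ⟨j - 12, by omega⟩
    have e : rgt ⟨j - 12, by omega⟩ = j := by
      apply Fin.ext; simp only [rgt]; omega
    rwa [e] at this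

/-- The word with prescribed first half. -/
def enc (N : ℕ) (r : Fin 12 → ZMod N) (j : Fin 24) : ZMod N :=
  if h : (j : ℕ) < 12 then r ⟨j, h⟩ else ∑ i, r i * (entA i ⟨j - 12, by omega⟩ : ZMod N)

@[simp] lemma enc_lft (N : ℕ) (r : Fin 12 → ZMod N) (i) : enc N r (lft i) = r i := by
  simp [enc, lft]

@[simp] lemma enc_rgt (N : ℕ) (r : Fin 12 → ZMod N) (k) :
    enc N r (rgt k) = ∑ i, r i * (entA i k : ZMod N) := by
  simp [enc, rgt]

lemma inCode_enc (N : ℕ) (r : Fin 12 → ZMod N) : InCode N (enc N r) := by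
  intro k; simp

lemma InCode.eq_enc {N : ℕ} {c : Fin 24 → ZMod N} (h : InCode N c) :
    c = enc N (fun i => c (lft i)) := by
  funext j
  revert j
  apply forall24
  · intro i; simp
  · intro k; rw [h k]; simp

lemma InCode.zero (N : ℕ) : InCode N 0 := by intro k; simp

lemma InCode.add {N : ℕ} {c d : Fin 24 → ZMod N} (hc : InCode N c) (hd : InCode N d) :
    InCode N (c + d) := by
  intro k; simp [hc k, hd k, add_mul, Finset.sum_add_distrib]

lemma InCode.smul {N : ℕ} {c : Fin 24 → ZMod N} (a : ZMod N) (hc : InCode N c) :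
    InCode N (a • c) := by
  intro k; simp [hc k, Finset.mul_sum, mul_assoc]

lemma InCode.neg {N : ℕ} {c : Fin 24 → ZMod N} (hc : InCode N c) : InCode N (-c) := by
  intro k; simp [hc k]

lemma InCode.sub {N : ℕ} {c d : Fin 24 → ZMod N} (hc : InCode N c) (hd : InCode N d) :
    InCode N (c - d) := by
  rw [sub_eq_add_neg]; exact hc.add hd.neg

lemma InCode.sum {N : ℕ} {ι : Type*} (s : Finset ι) (f : ι → Fin 24 → ZMod N)
    (h : ∀ i ∈ s, InCode N (f i)) : InCode N (∑ i ∈ s, f i) := by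
  classical
  induction s using Finset.induction_on with
  | empty => simpa using InCode.zero N
  | insert a s ha ih =>
    rw [Finset.sum_insert ha]
    exact (h a (by simp)).add (ih fun i hi => h i (by simp [hi]))

lemma tab_rows : ∀ i l : Fin 12,
    (∑ k, entA i k * eps k * entA l k + if i = l then 1 else 0) % 27 = 0 := by
  decide +kernel

lemma tab_cols : ∀ k l : Fin 12,
    (∑ i, entA i k * entA i l * eps l + if k = l then 1 else 0) % 27 = 0 := by
  decide +kernel

lemma cast_of_mod {N : ℕ} (hN : N ∣ 27) {a : ℕ} (h : a % 27 = 0) : (a : ZMod N) = 0 :=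
  (ZMod.natCast_eq_zero_iff a N).2 (hN.trans (Nat.dvd_of_mod_eq_zero h))

lemma rows_cast {N : ℕ} (hN : N ∣ 27) (i l : Fin 12) :
    ∑ k, (entA i k : ZMod N) * eps k * entA l k = - if i = l then 1 else 0 := by
  have := cast_of_mod hN (tab_rows i l)
  push_cast at this
  exact eq_neg_of_add_eq_zero_left this

lemma cols_cast {N : ℕ} (hN : N ∣ 27) (k l : Fin 12) :
    ∑ i, (entA i k : ZMod N) * entA i l * eps l = - if k = l then 1 else 0 := by
  have := cast_of_mod hN (tab_cols k l)
  push_cast at this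
  exact eq_neg_of_add_eq_zero_left this

/-- The form of a generator row with an arbitrary word. -/
lemma form_enc_single {N : ℕ} (i : Fin 12) (d : Fin 24 → ZMod N) :
    form N (enc N (Pi.single i 1)) d
      = d (lft i) + ∑ k, (eps k : ZMod N) * entA i k * d (rgt k) := by
  simp [form, Pi.single_apply]

lemma form_enc {N : ℕ} (r : Fin 12 → ZMod N) (d : Fin 24 → ZMod N) :
    form N (enc N r) d
      = ∑ i, r i * (d (lft i) + ∑ k, (eps k : ZMod N) * entA i k * d (rgt k)) := by
  simp only [form, enc_lft, enc_rgt, mul_add, Finset.sum_add_distrib, Finset.mul_sum,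
    Finset.sum_mul]
  congr 1
  rw [Finset.sum_comm]
  refine Finset.sum_congr rfl fun i _ => Finset.sum_congr rfl fun k _ => by ring

/-- The code is self-orthogonal. -/
lemma form_eq_zero {N : ℕ} (hN : N ∣ 27) {c d : Fin 24 → ZMod N} (hc : InCode N c)
    (hd : InCode N d) : form N c d = 0 := by
  rw [hc.eq_enc, form_enc]
  refine Finset.sum_eq_zero fun i _ => ?_
  have : ∑ k, (eps k : ZMod N) * entA i k * d (rgt k) = - d (lft i) := by
    calc ∑ k, (eps k : ZMod N) * entA i k * d (rgt k)
        = ∑ l, d (lft l) * ∑ k, (entA i k : ZMod N) * eps k * entA l k := by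
          simp only [hd _, Finset.mul_sum]
          rw [Finset.sum_comm]
          refine Finset.sum_congr rfl fun l _ => Finset.sum_congr rfl fun k _ => by ring
      _ = - d (lft i) := by
          simp [rows_cast hN]
  rw [this]; simp

/-- The code contains its dual. -/
lemma inCode_of_form {N : ℕ} (hN : N ∣ 27) {d : Fin 24 → ZMod N}
    (h : ∀ c, InCode N c → form N c d = 0) : InCode N d := by
  have h1 : ∀ i, d (lft i) = - ∑ l, (eps l : ZMod N) * entA i l * d (rgt l) := by
    intro i
    have := h _ (inCode_enc N (Pi.single i 1))
    rw [form_enc_single] at this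
    exact eq_neg_of_add_eq_zero_left this
  intro k
  calc d (rgt k) = - ∑ l, (- if k = l then 1 else 0) * d (rgt l) := by simp
    _ = - ∑ l, (∑ i, (entA i k : ZMod N) * entA i l * eps l) * d (rgt l) := by
        simp only [cols_cast hN]
    _ = ∑ i, d (lft i) * (entA i k : ZMod N) := by
        simp only [h1, Finset.sum_mul, neg_mul, Finset.sum_neg_distrib]
        rw [Finset.sum_comm]
        congr 1
        refine Finset.sum_congr rfl fun l _ => Finset.sum_congr rfl fun k _ => by ring

/-- Reduction modulo `3`. -/
def red (a : ZMod 27) : ZMod 3 := ZMod.castHom (by norm_num : 3 ∣ 27) (ZMod 3) a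

lemma inCode_red {c : Fin 24 → ZMod 27} (hc : InCode 27 c) : InCode 3 (fun j => red (c j)) := by
  intro k
  simp only [red, hc k, map_sum, map_mul, map_natCast]

/-! ### Monomial automorphisms -/

/-- The entries of the generator matrix `[I | A]`, as natural numbers. -/
def gen (i : Fin 12) (j : Fin 24) : ℕ :=
  if h : (j : ℕ) < 12 then (if (i : ℕ) = j then 1 else 0) else entA i ⟨j - 12, by omega⟩

lemma enc_eq_gen {N : ℕ} (r : Fin 12 → ZMod N) (j : Fin 24) :
    enc N r j = ∑ i, r i * (gen i j : ZMod N) := by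
  unfold enc gen
  split_ifs with h
  · simp [← Fin.ext_iff (b := (⟨j, h⟩ : Fin 12))]
  · rfl

/-- A monomial map preserves the code as soon as it sends the generator rows into it. -/
lemma inCode_mono (lam : Fin 24 → ℕ) (p : Fin 24 → Fin 24)
    (h : ∀ i k, (lam (rgt k) * gen i (p (rgt k))) % 27
      = (∑ l, lam (lft l) * gen i (p (lft l)) * entA l k) % 27)
    {c : Fin 24 → ZMod 27} (hc : InCode 27 c) :
    InCode 27 (fun j => (lam j : ZMod 27) * c (p j)) := by
  intro k
  rw [hc.eq_enc]
  simp only [enc_eq_gen, Finset.mul_sum, Finset.sum_mul]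
  rw [Finset.sum_comm]
  refine Finset.sum_congr rfl fun i _ => ?_
  have := (ZMod.natCast_eq_natCast_iff' _ _ 27).2 (h i k)
  push_cast at this
  calc _ = c (lft i) * ((lam (rgt k) : ZMod 27) * gen i (p (rgt k))) := by ring
    _ = _ := by
      rw [this, Finset.mul_sum]
      exact Finset.sum_congr rfl fun l _ => by ring

/-- The affine permutation `j ↦ m * j + a` of `ℤ/23ℤ ∪ {∞}`, the point `∞` being `23`. -/
def aff (a m : ℕ) (j : Fin 24) : Fin 24 :=
  if (j : ℕ) = 23 then 23 else ⟨(a + m * j) % 23, by omega⟩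

/-- The permutation `j ↦ -1/j` of the projective line over `ℤ/23ℤ`. -/
def invol (j : Fin 24) : Fin 24 :=
  if (j : ℕ) = 23 then 0 else if (j : ℕ) = 0 then 23 else ⟨(22 * (j : ℕ) ^ 21) % 23, by omega⟩

/-- The multipliers of the monomial automorphism over `j ↦ -1/j`: quadratic characters at the
finite nonzero points, and scalings of the points `0` and `∞` coming from
`7 = 14² = 25⁻²`. -/
def lamS (j : Fin 24) : ℕ :=
  if (j : ℕ) = 23 then 25 else if (j : ℕ) = 0 then 14
  else if (j : ℕ) ^ 11 % 23 = 1 then 26 else 1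

lemma inCode_shift {c : Fin 24 → ZMod 27} (hc : InCode 27 c) :
    InCode 27 (fun j => ((1 : ℕ) : ZMod 27) * c (aff 1 1 j)) :=
  inCode_mono (fun _ => 1) (aff 1 1) (by decide +kernel) hc

lemma inCode_mult {c : Fin 24 → ZMod 27} (hc : InCode 27 c) :
    InCode 27 (fun j => ((1 : ℕ) : ZMod 27) * c (aff 0 2 j)) :=
  inCode_mono (fun _ => 1) (aff 0 2) (by decide +kernel) hc

lemma inCode_invol {c : Fin 24 → ZMod 27} (hc : InCode 27 c) :
    InCode 27 (fun j => (lamS j : ZMod 27) * c (invol j)) :=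
  inCode_mono lamS invol (by decide +kernel) hc

lemma aff_one_inj : Function.Injective (aff 1 1) := by decide +kernel

lemma aff_two_inj : Function.Injective (aff 0 2) := by decide +kernel

lemma invol_inj : Function.Injective invol := by decide +kernel

lemma lamS_unit : ∀ j, IsUnit (lamS j : ZMod 27) := by
  intro j
  rw [ZMod.isUnit_iff_coprime]
  revert j
  decide +kernel

/-! ### The two Hensel lifts and their codes -/

/-- Coefficients (in increasing degree) of one of the two Hensel lifts modulo `27`. -/
def coefs1 : List ℕ := [26, 12, 15, 4, 18, 4, 0, 11, 23, 10, 13, 1]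

/-- Coefficients of the other Hensel lift, the negative reverse of the first. -/
def coefs2 : List ℕ := [26, 14, 17, 4, 16, 0, 23, 9, 23, 12, 15, 1]

/-- The polynomial over `ℤ/Nℤ` with the given list of twelve coefficients. -/
def polyOf (l : List ℕ) (N : ℕ) : Polynomial (ZMod N) :=
  ∑ i : Fin 12, Polynomial.monomial (i : ℕ) ((l.getD i 0 : ℕ) : ZMod N)

lemma coeff_polyOf (l : List ℕ) (hl : l.length = 12) (N n : ℕ) :
    (polyOf l N).coeff n = ((l.getD n 0 : ℕ) : ZMod N) := by
  simp only [polyOf, Polynomial.finsetSum_coeff, Polynomial.coeff_monomial]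
  by_cases hn : n < 12
  · rw [Finset.sum_eq_single (⟨n, hn⟩ : Fin 12)]
    · simp
    · intro b _ hb
      rw [if_neg]
      intro h
      exact hb (Fin.ext h)
    · simp
  · rw [Finset.sum_eq_zero, List.getD_eq_default _ _ (by omega)]
    · simp
    · intro b _
      rw [if_neg]
      omega

lemma natDegree_polyOf_le (l : List ℕ) (N : ℕ) : (polyOf l N).natDegree ≤ 11 := by
  refine Polynomial.natDegree_sum_le_of_forall_le _ _ fun i _ => ?_
  exact (Polynomial.natDegree_monomial_le _).trans (by omega)

lemma monic_polyOf (l : List ℕ) (hl : l.length = 12) (h : l.getD 11 0 = 1) (N : ℕ) :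
    (polyOf l N).Monic := by
  refine Polynomial.monic_of_natDegree_le_of_coeff_eq_one 11 (natDegree_polyOf_le l N) ?_
  rw [coeff_polyOf l hl, h]; simp

lemma natDegree_polyOf (l : List ℕ) (hl : l.length = 12) (h : l.getD 11 0 = 1) {N : ℕ}
    (hN : 1 < N) : (polyOf l N).natDegree = 11 := by
  have : Fact (1 < N) := ⟨hN⟩
  refine Polynomial.natDegree_eq_of_le_of_coeff_ne_zero (natDegree_polyOf_le l N) ?_
  rw [coeff_polyOf l hl, h]; simp

lemma map_polyOf (l : List ℕ) :
    (polyOf l 27).map (ZMod.castHom (by norm_num : 3 ∣ 27) (ZMod 3)) = polyOf l 3 := by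
  simp [polyOf, Polynomial.map_sum]

/-- The factorization of `X ^ 23 - 1`, valid modulo `27` and hence modulo `3`. -/
lemma qr_factorization {N : ℕ} (hN : N ∣ 27) :
    polyOf coefs1 N * ((Polynomial.X - 1) * polyOf coefs2 N)
      = (Polynomial.X ^ 23 - 1 : Polynomial (ZMod N)) := by
  have h27 : (27 : Polynomial (ZMod N)) = 0 := by
    have : ((27 : ℕ) : ZMod N) = 0 := (ZMod.natCast_eq_zero_iff _ _).2 hN
    calc (27 : Polynomial (ZMod N)) = Polynomial.C ((27 : ℕ) : ZMod N) := by
          rw [Polynomial.C_eq_natCast]; rfl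
      _ = 0 := by rw [this, Polynomial.C_0]
  have hp : ∀ l : List ℕ, polyOf l N
      = ∑ i ∈ Finset.range 12, ((l.getD i 0 : ℕ) : Polynomial (ZMod N)) * Polynomial.X ^ i := by
    intro l
    rw [polyOf, Fin.sum_univ_eq_sum_range
      (fun i => Polynomial.monomial i ((l.getD i 0 : ℕ) : ZMod N)) 12]
    refine Finset.sum_congr rfl fun i _ => ?_
    rw [← Polynomial.C_mul_X_pow_eq_monomial, Polynomial.C_eq_natCast]
  rw [hp, hp]
  simp only [Finset.sum_range_succ, Finset.sum_range_zero, coefs1, coefs2,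
    List.getD_cons_zero, List.getD_cons_succ]
  generalize (Polynomial.X : Polynomial (ZMod N)) = x
  push_cast
  linear_combination (
    (-25) * x ^ 0 + (-12) * x ^ 2 + (14) * x ^ 3 + (-23) * x ^ 4 + (21) * x ^ 5 + (-20) * x ^ 6
    + (8) * x ^ 7 + (-41) * x ^ 8 + (17) * x ^ 9 + (-22) * x ^ 10 + (32) * x ^ 11 + (19) * x
    ^ 13 + (-11) * x ^ 14 + (14) * x ^ 15 + (-10) * x ^ 16 + (9) * x ^ 17 + (1) * x ^ 18 +
    (16) * x ^ 19 + (5) * x ^ 20 + (7) * x ^ 21 + (1) * x ^ 22) * h27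

lemma eq_of_monic_dvd {R : Type*} [CommRing R] {p q : Polynomial R} (hp : p.Monic)
    (hq : q.Monic) (hdiv : p ∣ q) (hdeg : q.natDegree ≤ p.natDegree) : p = q :=
  (Polynomial.eq_of_monic_of_dvd_of_natDegree_le hp hq hdiv hdeg).symm

/-- Uniqueness of the Hensel lift. -/
lemma hensel_unique {G H g3 : Polynomial (ZMod 27)} (hG : G.Monic)
    (hGH : G * H = Polynomial.X ^ 23 - 1) (hg3 : g3.Monic) (hdeg : G.natDegree ≤ g3.natDegree)
    (hdvd : g3 ∣ Polynomial.X ^ 23 - 1)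
    (hmap : g3.map (ZMod.castHom (by norm_num : 3 ∣ 27) (ZMod 3))
      = G.map (ZMod.castHom (by norm_num : 3 ∣ 27) (ZMod 3))) : g3 = G := by
  have hsep : (G * H).Separable := by
    have := Polynomial.separable_X_pow_sub_C_unit (n := 23) (1 : (ZMod 27)ˣ)
      ((ZMod.isUnit_iff_coprime 23 27).2 (by norm_num))
    rw [hGH]; simpa using this
  obtain ⟨a, b, hab⟩ := hsep.isCoprime
  have hnil : IsNilpotent (g3 - G) := by
    rw [Polynomial.isNilpotent_iff]
    intro i
    have h0 : ZMod.castHom (by norm_num : 3 ∣ 27) (ZMod 3) ((g3 - G).coeff i) = 0 := by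
      rw [← Polynomial.coeff_map, Polynomial.map_sub, hmap, sub_self, Polynomial.coeff_zero]
    refine ⟨3, ?_⟩
    generalize (g3 - G).coeff i = x at h0
    revert x
    decide
  have hunit : IsUnit (1 + a * (g3 - G)) := ((Commute.all _ _).isNilpotent_mul_left hnil).isUnit_one_add
  have hcop : IsCoprime g3 H := by
    obtain ⟨w, hw⟩ := hunit
    refine ⟨↑w⁻¹ * a, ↑w⁻¹ * b, ?_⟩
    calc ↑w⁻¹ * a * g3 + ↑w⁻¹ * b * H = ↑w⁻¹ * ((a * G + b * H) + a * (g3 - G)) := by ring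
      _ = 1 := by rw [hab, ← hw, Units.inv_mul]
  refine eq_of_monic_dvd hg3 hG ?_ hdeg
  rw [← hGH] at hdvd
  exact hcop.dvd_of_dvd_mul_right hdvd

/-- A Hensel lift of a factor of degree `11` is one of the two explicit polynomials. -/
lemma lift_cases {g : Polynomial (ZMod 3)} (hg : IsQRFactor 3 g) {g3 : Polynomial (ZMod 27)}
    (hm : g3.Monic) (hd : g3.natDegree = 11) (hdvd : g3 ∣ (Polynomial.X ^ 23 - 1))
    (hmap : g3.map (ZMod.castHom (by norm_num : 3 ∣ 27) (ZMod 3)) = g) :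
    g3 = polyOf coefs1 27 ∨ g3 = polyOf coefs2 27 := by
  obtain ⟨gm, gd, gi, gdvd⟩ := hg
  have f3 := qr_factorization (N := 3) (by norm_num)
  have f27 := qr_factorization (N := 27) (by norm_num)
  have hprime : Prime g := gi.prime
  rw [← f3] at gdvd
  have hl1 : coefs1.length = 12 := rfl
  have hl2 : coefs2.length = 12 := rfl
  have h1 : coefs1.getD 11 0 = 1 := rfl
  have h2 : coefs2.getD 11 0 = 1 := rfl
  rcases hprime.dvd_or_dvd gdvd with h | h
  · left
    have e : g = polyOf coefs1 3 := eq_of_monic_dvd gm (monic_polyOf _ hl1 h1 _) h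
      (by rw [gd]; exact natDegree_polyOf_le _ _)
    refine hensel_unique (monic_polyOf _ hl1 h1 _) f27 hm
      (by rw [hd]; exact natDegree_polyOf_le _ _) hdvd ?_
    rw [hmap, e, map_polyOf]
  · rcases hprime.dvd_or_dvd h with h | h
    · exfalso
      have := Polynomial.natDegree_le_of_dvd h (by
        simpa using Polynomial.X_sub_C_ne_zero (1 : ZMod 3))
      rw [gd] at this
      have h1 : (Polynomial.X - 1 : Polynomial (ZMod 3)).natDegree = 1 := by
        simpa using Polynomial.natDegree_X_sub_C (1 : ZMod 3)
      omega
    · right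
      have e : g = polyOf coefs2 3 := eq_of_monic_dvd gm (monic_polyOf _ hl2 h2 _) h
        (by rw [gd]; exact natDegree_polyOf_le _ _)
      refine hensel_unique (H := (Polynomial.X - 1) * polyOf coefs1 27)
        (monic_polyOf _ hl2 h2 _) (by rw [← f27]; ring) hm
        (by rw [hd]; exact natDegree_polyOf_le _ _) hdvd ?_
      rw [hmap, e, map_polyOf]

/-- The `i`-th cyclic shift (without wrapping) of the coefficient list, extended by a parity
check. -/
def band (l : List ℕ) (i : Fin 12) (j : Fin 24) : ℕ :=
  if (j : ℕ) = 23 then 26 * l.sum else if (i : ℕ) ≤ j then l.getD (j - i) 0 else 0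

/-- The remainders of multiples of `G` modulo `X ^ 23 - 1` are the products `t * G` with
`deg t < 12`. -/
lemma exists_rem_iff {G H : Polynomial (ZMod 27)} (hG : G.Monic) (hGd : G.natDegree = 11)
    (hH : H.Monic) (hHd : H.natDegree = 12)
    (hGH : G * H = Polynomial.X ^ 23 - 1) (c : Fin 23 → ZMod 27) :
    (∃ f : Polynomial (ZMod 27), ∀ j : Fin 23,
        c j = ((f * G) %ₘ (Polynomial.X ^ 23 - 1)).coeff (j : ℕ)) ↔
      ∃ t : Fin 12 → ZMod 27, ∀ j : Fin 23,
        c j = ∑ i : Fin 12, t i * (if (i : ℕ) ≤ j then G.coeff (j - i) else 0) := by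
  have : Fact (1 < 27) := ⟨by norm_num⟩
  have hmonic : (Polynomial.X ^ 23 - 1 : Polynomial (ZMod 27)).Monic := by
    rw [← hGH]; exact hG.mul hH
  have hcoef : ∀ (t : Fin 12 → ZMod 27) (j : ℕ),
      ((∑ i : Fin 12, Polynomial.monomial (i : ℕ) (t i)) * G).coeff j
        = ∑ i : Fin 12, t i * (if (i : ℕ) ≤ j then G.coeff (j - i) else 0) := by
    intro t j
    rw [Finset.sum_mul, Polynomial.finsetSum_coeff]
    refine Finset.sum_congr rfl fun i _ => ?_
    rw [← Polynomial.C_mul_X_pow_eq_monomial, mul_assoc, Polynomial.coeff_C_mul,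
      Polynomial.coeff_X_pow_mul']
  have hX : (Polynomial.X ^ 23 - 1 : Polynomial (ZMod 27)).degree = 23 := by
    rw [← hGH, Polynomial.degree_eq_natDegree (hG.mul hH).ne_zero, hG.natDegree_mul hH, hGd, hHd]
    rfl
  have hrem : ∀ (t q : Polynomial (ZMod 27)), t.natDegree ≤ 11 →
      ((q * H + t) * G) %ₘ (Polynomial.X ^ 23 - 1) = t * G := by
    intro t q ht
    refine (Polynomial.div_modByMonic_unique q _ hmonic ⟨?_, ?_⟩).2
    · rw [← hGH]; ring
    · rw [hX]
      refine lt_of_le_of_lt (Polynomial.degree_le_natDegree) ?_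
      have := Polynomial.natDegree_mul_le (p := t) (q := G)
      exact_mod_cast (show (t * G).natDegree < 23 by omega)
  constructor
  · rintro ⟨f, hf⟩
    refine ⟨fun i => (f %ₘ H).coeff i, fun j => ?_⟩
    have hdeg : (f %ₘ H).natDegree < 12 := by
      have := Polynomial.natDegree_modByMonic_lt f hH (by
        intro h; rw [h] at hHd; simp at hHd)
      omega
    have e : f = (f /ₘ H) * H + f %ₘ H := by
      conv_lhs => rw [← Polynomial.modByMonic_add_div f H]
      ring
    rw [hf j, e, hrem _ _ (by omega), ← hcoef]
    congr 2
    conv_lhs => rw [Polynomial.as_sum_range' (f %ₘ H) 12 hdeg]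
    rw [Finset.sum_range]
    rw [← e]
  · rintro ⟨t, ht⟩
    refine ⟨∑ i : Fin 12, Polynomial.monomial (i : ℕ) (t i), fun j => ?_⟩
    have := hrem (∑ i : Fin 12, Polynomial.monomial (i : ℕ) (t i)) 0 (by
      refine Polynomial.natDegree_sum_le_of_forall_le _ _ fun i _ => ?_
      exact (Polynomial.natDegree_monomial_le _).trans (by omega))
    rw [zero_mul, zero_add] at this
    rw [ht j, this, hcoef]

lemma band_sum (l : List ℕ) (hl : l.length = 12) (i : Fin 12) :
    ∑ j : Fin 23, (if (i : ℕ) ≤ j then l.getD (j - i) 0 else 0) = l.sum := by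
  obtain ⟨a0, a1, a2, a3, a4, a5, a6, a7, a8, a9, a10, a11, rfl⟩ :
      ∃ a0 a1 a2 a3 a4 a5 a6 a7 a8 a9 a10 a11, l = [a0, a1, a2, a3, a4, a5, a6, a7, a8, a9,
        a10, a11] := by
    match l, hl with
    | [a0, a1, a2, a3, a4, a5, a6, a7, a8, a9, a10, a11], _ => exact ⟨_, _, _, _, _, _, _, _, _, _, _, _, rfl⟩
  fin_cases i <;> simp [Fin.sum_univ_succ]

/-- The extended cyclic code generated by `G` is spanned by the rows `band`. -/
lemma mem_iff_band (l : List ℕ) (hl : l.length = 12) (h1 : l.getD 11 0 = 1)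
    {H : Polynomial (ZMod 27)} (hH : H.Monic) (hHd : H.natDegree = 12)
    (hGH : polyOf l 27 * H = Polynomial.X ^ 23 - 1) (c : Fin 24 → ZMod 27) :
    ((∃ f : Polynomial (ZMod 27), ∀ j : Fin 23,
          c (Fin.castSucc j) = ((f * polyOf l 27) %ₘ (Polynomial.X ^ 23 - 1)).coeff (j : ℕ)) ∧
        c (Fin.last 23) = - ∑ j : Fin 23, c (Fin.castSucc j)) ↔
      ∃ t : Fin 12 → ZMod 27, ∀ j, c j = ∑ i, t i * (band l i j : ZMod 27) := by
  rw [exists_rem_iff (monic_polyOf l hl h1 27) (natDegree_polyOf l hl h1 (by norm_num)) hH hHd hGH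
    (fun j => c (Fin.castSucc j))]
  have hb : ∀ (i : Fin 12) (j : Fin 23), ((band l i (Fin.castSucc j) : ℕ) : ZMod 27)
      = if (i : ℕ) ≤ j then (polyOf l 27).coeff (j - i) else 0 := by
    intro i j
    have : (j : ℕ) ≠ 23 := by omega
    simp only [band, Fin.val_castSucc, if_neg this, coeff_polyOf l hl]
    split_ifs <;> simp
  have hlast : ∀ i : Fin 12, ((band l i (Fin.last 23) : ℕ) : ZMod 27)
      = - ∑ j : Fin 23, if (i : ℕ) ≤ j then (polyOf l 27).coeff (j - i) else 0 := by
    intro i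
    have h26 : (26 : ZMod 27) = -1 := by decide
    have := congrArg (Nat.cast : ℕ → ZMod 27) (band_sum l hl i)
    rw [Nat.cast_sum] at this
    simp only [coeff_polyOf l hl]
    rw [show (band l i (Fin.last 23)) = 26 * l.sum from rfl, Nat.cast_mul, ← this]
    push_cast
    rw [h26, neg_one_mul]
  constructor
  · rintro ⟨⟨t, ht⟩, hc⟩
    refine ⟨t, fun j => ?_⟩
    refine Fin.lastCases ?_ (fun j => ?_) j
    · rw [hc]
      simp only [ht, hlast, mul_neg, Finset.sum_neg_distrib, Finset.mul_sum]
      rw [Finset.sum_comm]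
    · simp only [ht, hb]
  · rintro ⟨t, ht⟩
    refine ⟨⟨t, fun j => ?_⟩, ?_⟩
    · simp only [ht, hb]
    · simp only [ht, hlast, hb, mul_neg, Finset.sum_neg_distrib, Finset.mul_sum]
      rw [Finset.sum_comm]

/-- Comparison of the spans of two generator matrices, up to a coordinate permutation. -/
lemma band_iff_inCode (b : Fin 12 → Fin 24 → ℕ) (U : Fin 12 → Fin 12 → ℕ) (p : Fin 24 → Fin 24)
    (hp : ∀ j, p (p j) = j)
    (h1 : ∀ i k, b i (p (rgt k)) % 27 = (∑ l, b i (p (lft l)) * entA l k) % 27)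
    (h2 : ∀ i j, gen i (p j) % 27 = (∑ l, U i l * b l j) % 27) (c : Fin 24 → ZMod 27) :
    (∃ t : Fin 12 → ZMod 27, ∀ j, c j = ∑ i, t i * (b i j : ZMod 27)) ↔
      InCode 27 (fun j => c (p j)) := by
  constructor
  · rintro ⟨t, ht⟩
    have : (fun j => c (p j)) = ∑ i, t i • (fun j => (b i (p j) : ZMod 27)) := by
      funext j; simp [ht, Finset.sum_apply]
    rw [this]
    refine InCode.sum _ _ fun i _ => InCode.smul _ ?_
    intro k
    have := (ZMod.natCast_eq_natCast_iff' _ _ 27).2 (h1 i k)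
    push_cast at this
    exact this
  · intro h
    refine ⟨fun l => ∑ i, c (p (lft i)) * (U i l : ZMod 27), fun j => ?_⟩
    have e := congrFun h.eq_enc (p j)
    simp only [hp, enc_eq_gen] at e
    rw [e]
    simp only [Finset.sum_mul]
    rw [Finset.sum_comm]
    refine Finset.sum_congr rfl fun i _ => ?_
    have := (ZMod.natCast_eq_natCast_iff' _ _ 27).2 (h2 i j)
    push_cast at this
    rw [this, Finset.mul_sum]
    exact Finset.sum_congr rfl fun l _ => by ring

/-- Coefficients of the inverse power series of the first Hensel lift, up to order `11`. -/
def invCoefs : List ℕ := [26, 15, 3, 14, 12, 11, 23, 13, 14, 16, 3, 13]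

/-- Coordinate reversal of `ℤ/23ℤ`, fixing `∞`. -/
def rev (j : Fin 24) : Fin 24 := if (j : ℕ) = 23 then 23 else ⟨22 - j, by omega⟩

lemma rev_rev : ∀ j, rev (rev j) = j := by decide +kernel

/-- Up to a coordinate permutation, the lifted extended quadratic residue code is the explicit
systematic code. -/
lemma exists_perm {g : Polynomial (ZMod 3)} (hg : IsQRFactor 3 g) {g3 : Polynomial (ZMod 27)}
    {C3 : Submodule (ZMod 27) (Fin 24 → ZMod 27)}
    (hC3 : IsLiftedQR (by norm_num : (3:ℕ) ∣ 27) g g3 C3) :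
    ∃ p : Equiv.Perm (Fin 24), ∀ c, c ∈ C3 ↔ InCode 27 (fun j => c (p j)) := by
  obtain ⟨hm, hd, hdvd, hmap, hmem⟩ := hC3
  have : Fact (1 < 27) := ⟨by norm_num⟩
  have f27 := qr_factorization (N := 27) (by norm_num)
  have hX : (Polynomial.X - 1 : Polynomial (ZMod 27)).Monic := by
    simpa using Polynomial.monic_X_sub_C (1 : ZMod 27)
  have hXd : (Polynomial.X - 1 : Polynomial (ZMod 27)).natDegree = 1 := by
    simpa using Polynomial.natDegree_X_sub_C (1 : ZMod 27)
  have m1 := monic_polyOf coefs1 rfl rfl 27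
  have m2 := monic_polyOf coefs2 rfl rfl 27
  have d1 := natDegree_polyOf coefs1 rfl rfl (N := 27) (by norm_num)
  have d2 := natDegree_polyOf coefs2 rfl rfl (N := 27) (by norm_num)
  rcases lift_cases hg hm hd hdvd hmap with rfl | rfl
  · refine ⟨1, fun c => ?_⟩
    rw [hmem, mem_iff_band coefs1 rfl rfl (hX.mul m2) (by rw [hX.natDegree_mul m2, hXd, d2]) f27]
    exact band_iff_inCode (band coefs1)
      (fun i l => if (i : ℕ) ≤ l then invCoefs.getD (l - i) 0 else 0) id (fun _ => rfl)
      (by decide +kernel) (by decide +kernel) c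
  · refine ⟨⟨rev, rev, rev_rev, rev_rev⟩, fun c => ?_⟩
    rw [hmem, mem_iff_band coefs2 rfl rfl (hX.mul m1) (by rw [hX.natDegree_mul m1, hXd, d1])
      (by rw [← f27]; ring)]
    exact band_iff_inCode (band coefs2)
      (fun i l => if (i : ℕ) + l ≤ 11 then 26 * invCoefs.getD (11 - l - i) 0 else 0) rev rev_rev
      (by decide +kernel) (by decide +kernel) c

/-! ### Expanding the weight enumerator over dual words -/

/-- The standard additive character of `ℤ/27ℤ`. -/
def chi : AddChar (ZMod 27) ℂ := ZMod.stdAddChar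

lemma chi_inj {a b : ZMod 27} (h : chi a = chi b) : a = b := ZMod.injective_stdAddChar h

lemma chi_omega : 1 + chi 9 + chi 18 = 0 := by
  have h1 : chi 9 ≠ 1 := fun h => by
    have := chi_inj (a := 9) (b := 0) (by rw [h, AddChar.map_zero_eq_one])
    revert this; decide
  have h2 : chi 18 = chi 9 * chi 9 := by rw [← AddChar.map_add_eq_mul]; congr 1
  have h3 : chi 9 * chi 9 * chi 9 = 1 := by
    rw [← AddChar.map_add_eq_mul, ← AddChar.map_add_eq_mul, ← AddChar.map_zero_eq_one chi]
    congr 1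
  have : (chi 9 - 1) * (1 + chi 9 + chi 18) = 0 := by rw [h2]; linear_combination h3
  exact (mul_eq_zero.1 this).resolve_left (sub_ne_zero.2 h1)

/-- The value attached to a coordinate of a word: `x₀`, `x₁`, `z - y`, `z + 2 y` for a coordinate
of valuation `0`, `1`, `2`, `∞`. The variables `x₀, x₁, y, z` are `X 0, X 1, X 2, X 3`. -/
def ff (c : ZMod 27) : MvPolynomial (Fin 4) ℂ :=
  if c = 0 then X 3 + 2 * X 2 else if 3 * c = 0 then X 3 - X 2 else if 9 * c = 0 then X 1 else X 0

/-- The value `x₀`, `x₁`, `z` attached to a coordinate modulo `9`. -/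
def base (c : ZMod 27) : MvPolynomial (Fin 4) ℂ :=
  if 3 * c = 0 then X 3 else if 9 * c = 0 then X 1 else X 0

/-- The Fourier kernel: `ff c` is the sum of `kk c t` over `t`, the term at `t = 0` being the part
without `y`. -/
def kk (c : ZMod 27) (t : ZMod 3) : MvPolynomial (Fin 4) ℂ :=
  if t = 0 then base c else if 3 * c = 0 then C (chi ((t.val : ZMod 27) * c)) * X 2 else 0

lemma three_mul_cases : ∀ c : ZMod 27, 3 * c = 0 → c = 0 ∨ c = 9 ∨ c = 18 := by decide

lemma sum_zmod3 {M : Type*} [AddCommMonoid M] (f : ZMod 3 → M) :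
    ∑ t, f t = f 0 + f 1 + f 2 := Fin.sum_univ_three f

lemma ff_eq (c : ZMod 27) : ff c = ∑ t, kk c t := by
  rw [sum_zmod3]
  have h18 : (2 : ZMod 27) * 18 = 9 := by decide
  have h9 : (2 : ZMod 27) * 9 = 18 := by decide
  have hC : (C (chi 9) + C (chi 18) : MvPolynomial (Fin 4) ℂ) = -1 := by
    rw [← C_add, show chi 9 + chi 18 = -1 by linear_combination chi_omega]; simp
  have v1 : ((1 : ZMod 3).val : ZMod 27) = 1 := by decide
  have v2 : ((2 : ZMod 3).val : ZMod 27) = 2 := by decide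
  have t1 : (1 : ZMod 3) ≠ 0 := by decide
  have t2 : (2 : ZMod 3) ≠ 0 := by decide
  by_cases h : 3 * c = 0
  · simp only [kk, base, ff, h, if_true, v1, v2, t1, t2, if_false]
    rcases three_mul_cases c h with rfl | rfl | rfl
    · simp [AddChar.map_zero_eq_one]; ring
    · rw [if_neg (by decide), h9, one_mul]
      linear_combination (-X 2) * hC
    · rw [if_neg (by decide), h18, one_mul]
      linear_combination (-X 2) * hC
  · have h0 : c ≠ 0 := by rintro rfl; simp at h
    simp [kk, base, ff, h, h0, t1, t2]

/-- The code, as a finite set of words. -/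
def Cd : Finset (Fin 24 → ZMod 27) := Finset.univ.filter (InCode 27)

@[simp] lemma mem_Cd {c : Fin 24 → ZMod 27} : c ∈ Cd ↔ InCode 27 c := by simp [Cd]

/-- The ternary code, as a finite set of words. -/
def Cd3 : Finset (Fin 24 → ZMod 3) := Finset.univ.filter (InCode 3)

@[simp] lemma mem_Cd3 {u : Fin 24 → ZMod 3} : u ∈ Cd3 ↔ InCode 3 u := by simp [Cd3]

attribute [irreducible] Cd Cd3

/-- The specialized symmetrized weight enumerator, with complex coefficients. -/
def WW : MvPolynomial (Fin 4) ℂ := ∑ c ∈ Cd, ∏ j, ff (c j)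

/-- The contribution to `WW` of a frequency vector `u`. -/
def VV (u : Fin 24 → ZMod 3) : MvPolynomial (Fin 4) ℂ := ∑ c ∈ Cd, ∏ j, kk (c j) (u j)

lemma WW_eq_all : WW = ∑ u, VV u := by
  simp only [WW, VV, ff_eq]
  rw [Finset.sum_comm]
  refine Finset.sum_congr rfl fun c _ => ?_
  rw [Finset.prod_univ_sum, Fintype.piFinset_univ]

/-- The pairing of a ternary word with a word modulo `27`. -/
def pair (u : Fin 24 → ZMod 3) (v : Fin 24 → ZMod 27) : ZMod 27 :=
  ∑ j, ((u j).val : ZMod 27) * v j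

lemma kk_translate (c v : ZMod 27) (t : ZMod 3) :
    kk (c + 9 * v) t = C (chi (9 * ((t.val : ZMod 27) * v))) * kk c t := by
  have h1 : 3 * (c + 9 * v) = 3 * c := by
    have : (27 : ZMod 27) = 0 := by decide
    linear_combination v * this
  have h2 : 9 * (c + 9 * v) = 9 * c := by
    have : (27 : ZMod 27) = 0 := by decide
    linear_combination (3 * v) * this
  unfold kk base
  rw [h1, h2]
  split_ifs with h h' h'
  · subst h; simp [AddChar.map_zero_eq_one]
  · subst h; simp [AddChar.map_zero_eq_one]
  · subst h; simp [AddChar.map_zero_eq_one]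
  · rw [← mul_assoc, ← C_mul, ← AddChar.map_add_eq_mul]
    congr 3
    ring
  · simp

lemma prod_kk_translate (c v : Fin 24 → ZMod 27) (u : Fin 24 → ZMod 3) :
    ∏ j, kk ((c + 9 • v) j) (u j) = C (chi (9 * pair u v)) * ∏ j, kk (c j) (u j) := by
  have : ∀ j, (c + 9 • v) j = c j + 9 * v j := fun j => by simp
  simp only [this, kk_translate, Finset.prod_mul_distrib, pair, Finset.mul_sum]
  congr 1
  rw [← map_prod]
  congr 1
  exact (map_prod chi.toMonoidHom
    (fun j => Multiplicative.ofAdd (9 * (((u j).val : ZMod 27) * v j))) Finset.univ).symm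

lemma inCode_translate {c v : Fin 24 → ZMod 27} (hv : InCode 27 v) :
    InCode 27 (c + 9 • v) ↔ InCode 27 c := by
  have h9 : InCode 27 (9 • v) := by
    have := hv.smul 9
    convert this using 1
    funext j; simp
  refine ⟨fun h => ?_, fun h => h.add h9⟩
  have := h.sub h9
  simpa using this

lemma VV_translate (u : Fin 24 → ZMod 3) {v : Fin 24 → ZMod 27} (hv : InCode 27 v) :
    VV u = C (chi (9 * pair u v)) * VV u := by
  conv_lhs => rw [VV]
  rw [VV, Finset.mul_sum]
  symm
  refine Finset.sum_equiv (Equiv.addRight (9 • v)) ?_ ?_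
  · intro c; rw [mem_Cd, mem_Cd, Equiv.coe_addRight, inCode_translate hv]
  · intro c _
    rw [Equiv.coe_addRight, prod_kk_translate]

lemma val_cast_red : ∀ t : ZMod 3, red (t.val : ZMod 27) = t := by
  intro t; simp [red]

lemma nine_mul_eq_zero_iff : ∀ a : ZMod 27, 9 * a = 0 ↔ red a = 0 := by decide

lemma eps_three : ∀ k, ((eps k : ℕ) : ZMod 3) = 1 := by decide

lemma form_three (c d : Fin 24 → ZMod 3) : form 3 c d = ∑ j, c j * d j := by
  rw [sum24]; simp [form, eps_three]

lemma red_pair (u : Fin 24 → ZMod 3) (v : Fin 24 → ZMod 27) :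
    red (pair u v) = form 3 (fun j => red (v j)) u := by
  rw [form_three]
  have : ∀ t : ZMod 3, ZMod.castHom (by norm_num : 3 ∣ 27) (ZMod 3) (t.val : ZMod 27) = t :=
    val_cast_red
  simp only [pair, red, map_sum, map_mul, this]
  exact Finset.sum_congr rfl fun j _ => mul_comm _ _

/-- A ternary codeword lifts to a codeword modulo `27`. -/
lemma exists_lift {d : Fin 24 → ZMod 3} (hd : InCode 3 d) :
    ∃ v, InCode 27 v ∧ ∀ j, red (v j) = d j := by
  refine ⟨enc 27 (fun i => ((d (lft i)).val : ZMod 27)), inCode_enc _ _, ?_⟩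
  intro j
  have h := inCode_red (inCode_enc 27 (fun i => ((d (lft i)).val : ZMod 27)))
  have e := congrFun h.eq_enc j
  simp only [enc_lft, val_cast_red] at e
  rw [e, ← hd.eq_enc]

lemma pair_eq_zero {u : Fin 24 → ZMod 3} (hu : InCode 3 u) {v : Fin 24 → ZMod 27}
    (hv : InCode 27 v) : 9 * pair u v = 0 := by
  rw [nine_mul_eq_zero_iff, red_pair]
  exact form_eq_zero (by norm_num) (inCode_red hv) hu

/-- Only frequency vectors in the (self-dual) ternary code contribute. -/
lemma VV_eq_zero {u : Fin 24 → ZMod 3} (hu : ¬ InCode 3 u) : VV u = 0 := by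
  by_contra hV
  apply hu
  apply inCode_of_form (by norm_num)
  intro d hd
  obtain ⟨v, hv, hvd⟩ := exists_lift hd
  have h := VV_translate u hv
  have h1 : (C (chi (9 * pair u v)) - 1 : MvPolynomial (Fin 4) ℂ) * VV u = 0 := by
    linear_combination -h
  have h2 := (mul_eq_zero.1 h1).resolve_right hV
  have h3 : chi (9 * pair u v) = chi 0 := by
    rw [AddChar.map_zero_eq_one]
    apply C_injective (Fin 4) ℂ
    rw [C_1]; exact sub_eq_zero.1 h2
  have h4 := chi_inj h3
  rw [nine_mul_eq_zero_iff, red_pair] at h4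
  simpa only [hvd] using h4

lemma WW_eq : WW = ∑ u ∈ Cd3, VV u := by
  rw [WW_eq_all]
  symm
  refine Finset.sum_subset (Finset.subset_univ _) fun u _ hu => VV_eq_zero fun h => hu (by simpa)

/-! ### Invariance under monomial automorphisms -/

lemma kk_unit : ∀ (l : ZMod 27), IsUnit l → ∀ (c : ZMod 27) (t : ZMod 3),
    kk (l * c) (red l * t) = kk c t := by
  intro l hl c t
  have h3 : 3 * (l * c) = 0 ↔ 3 * c = 0 := by
    rw [mul_left_comm]; exact hl.mul_right_eq_zero
  have h9 : 9 * (l * c) = 0 ↔ 9 * c = 0 := by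
    rw [mul_left_comm]; exact hl.mul_right_eq_zero
  have hr : IsUnit (red l) := hl.map _
  have h0 : red l * t = 0 ↔ t = 0 := hr.mul_right_eq_zero
  simp only [kk, base, h3, h9, h0]
  split_ifs with h _ _ h'
  · rfl
  · rfl
  · rfl
  · congr 3
    have key : ∀ (l : ZMod 27) (t : ZMod 3), red l ≠ 0 →
        9 * (((red l * t).val : ZMod 27) * l) = 9 * (t.val : ZMod 27) := by decide
    have hk := key l t hr.ne_zero
    rcases three_mul_cases c h' with rfl | rfl | rfl
    · simp
    · linear_combination hk
    · linear_combination 2 * hk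
  · rfl

/-- `VV` is invariant under the ternary reduction of a monomial automorphism of the code. -/
lemma VV_mono (p : Fin 24 → Fin 24) (hp : Function.Injective p) (lam : Fin 24 → ZMod 27)
    (hl : ∀ j, IsUnit (lam j))
    (hC : ∀ c, InCode 27 c → InCode 27 (fun j => lam j * c (p j))) (u : Fin 24 → ZMod 3) :
    VV (fun j => red (lam j) * u (p j)) = VV u := by
  have hinj : Function.Injective fun (c : Fin 24 → ZMod 27) j => lam j * c (p j) := by
    intro c d h
    funext j
    obtain ⟨i, rfl⟩ := (Finite.injective_iff_surjective.1 hp) j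
    exact (hl i).mul_left_cancel (congrFun h i)
  have himg : Cd.image (fun (c : Fin 24 → ZMod 27) j => lam j * c (p j)) = Cd := by
    apply Finset.eq_of_subset_of_card_le
    · rw [Finset.image_subset_iff]
      intro c hc
      rw [mem_Cd] at hc ⊢
      exact hC c hc
    · exact le_of_eq (Finset.card_image_of_injective _ hinj).symm
  rw [VV, ← himg, Finset.sum_image (fun a _ b _ h => hinj h), VV]
  refine Finset.sum_congr rfl fun c _ => ?_
  simp only [kk_unit _ (hl _)]
  exact (Equiv.ofBijective p (Finite.injective_iff_bijective.1 hp)).prod_comp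
    (fun j => kk (c j) (u j))

/-- The orbit of the ternary word `r` under the group generated by the monomial automorphisms. -/
inductive Orb (r : Fin 24 → ZMod 3) : (Fin 24 → ZMod 3) → Prop
  | refl : Orb r r
  | neg {u} : Orb r u → Orb r (fun j => 2 * u j)
  | shift {u} : Orb r u → Orb r (fun j => u (aff 1 1 j))
  | mult {u} : Orb r u → Orb r (fun j => u (aff 0 2 j))
  | invol {u} : Orb r u → Orb r (fun j => (lamS j : ZMod 3) * u (invol j))

lemma Orb.VV_eq {r u : Fin 24 → ZMod 3} (h : Orb r u) : VV u = VV r := by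
  induction h with
  | refl => rfl
  | @neg u _ ih =>
    rw [← ih]
    refine Eq.trans (congrArg VV (funext fun j => ?_)) (VV_mono id Function.injective_id
      (fun _ => -1) (fun _ => isUnit_one.neg) (fun c hc => ?_) u)
    · rfl
    · have := hc.neg
      convert this using 1
      funext j; simp
  | @shift u _ ih =>
    rw [← ih]
    refine Eq.trans (congrArg VV (funext fun j => ?_)) (VV_mono _ aff_one_inj
      (fun _ => ((1 : ℕ) : ZMod 27)) (fun _ => by simp) (fun c hc => inCode_shift hc) u)
    simp [red]
  | @mult u _ ih =>
    rw [← ih]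
    refine Eq.trans (congrArg VV (funext fun j => ?_)) (VV_mono _ aff_two_inj
      (fun _ => ((1 : ℕ) : ZMod 27)) (fun _ => by simp) (fun c hc => inCode_mult hc) u)
    simp [red]
  | @invol u _ ih =>
    rw [← ih]
    refine Eq.trans (congrArg VV (funext fun j => ?_)) (VV_mono _ invol_inj
      (fun j => (lamS j : ZMod 27)) lamS_unit (fun c hc => inCode_invol hc) u)
    simp [red]

/-! ### The bigrading by degrees in `x₀` and `y` -/

/-- The bigrading of `ℂ[x₀, x₁, y, z]` by degree in `x₀` and degree in `y`. -/
def wts : Fin 4 → ℕ × ℕ := ![(1, 0), (0, 0), (0, 1), (0, 0)]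

/-- The component of bidegree `(i, j)` in `(x₀, y)`. -/
abbrev comp (i j : ℕ) : MvPolynomial (Fin 4) ℂ →ₗ[ℂ] MvPolynomial (Fin 4) ℂ :=
  weightedHomogeneousComponent wts (i, j)

/-- The number of unit coordinates. -/
def n0 (c : Fin 24 → ZMod 27) : ℕ := ∑ j, if 9 * c j = 0 then 0 else 1

/-- The Hamming weight of a ternary word. -/
def wt (u : Fin 24 → ZMod 3) : ℕ := ∑ j, if u j = 0 then 0 else 1

attribute [irreducible] n0 wt

lemma kk_hom (c : ZMod 27) (t : ZMod 3) :
    IsWeightedHomogeneous wts (kk c t)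
      ((if 9 * c = 0 then 0 else 1, if t = 0 then 0 else 1) : ℕ × ℕ) := by
  have hX : ∀ i : Fin 4, IsWeightedHomogeneous wts (X i : MvPolynomial (Fin 4) ℂ) (wts i) :=
    fun i => isWeightedHomogeneous_X ℂ wts i
  have h39 : 3 * c = 0 → 9 * c = 0 := fun h => by linear_combination 3 * h
  unfold kk base
  split_ifs with h1 h2 h3 h4 h5 h6 <;> first
    | exact absurd (h39 ‹_›) ‹_›
    | exact isWeightedHomogeneous_zero _ _ _
    | exact hX _
    | exact (hX 2).C_mul _

lemma prod_kk_hom (c : Fin 24 → ZMod 27) (u : Fin 24 → ZMod 3) :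
    IsWeightedHomogeneous wts (∏ j, kk (c j) (u j)) (n0 c, wt u) := by
  have h := IsWeightedHomogeneous.prod (w := wts) Finset.univ (fun j => kk (c j) (u j)) _
    (fun j _ => kk_hom (c j) (u j))
  convert h using 1
  rw [Prod.ext_iff]
  simp only [n0, wt, Prod.fst_sum, Prod.snd_sum, and_self]

lemma comp_of_hom {P : MvPolynomial (Fin 4) ℂ} {a b : ℕ}
    (h : IsWeightedHomogeneous wts P (a, b)) (i j : ℕ) :
    comp i j P = if b = j then (if a = i then P else 0) else 0 := by
  by_cases hb : b = j
  · by_cases ha : a = i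
    · rw [if_pos hb, if_pos ha, ← ha, ← hb]
      exact h.weightedHomogeneousComponent_same
    · rw [if_pos hb, if_neg ha]
      exact h.weightedHomogeneousComponent_ne _ fun e => ha (Prod.ext_iff.1 e).1.symm
  · rw [if_neg hb]
    exact h.weightedHomogeneousComponent_ne _ fun e => hb (Prod.ext_iff.1 e).2.symm

lemma comp_VV (i j : ℕ) (u : Fin 24 → ZMod 3) :
    comp i j (VV u) =
      if wt u = j then ∑ c ∈ Cd with n0 c = i, ∏ l, kk (c l) (u l) else 0 := by
  rw [VV, map_sum]
  simp only [comp_of_hom (prod_kk_hom _ _)]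
  split_ifs with h
  · rw [Finset.sum_filter]
  · simp

lemma comp_WW (i j : ℕ) :
    comp i j WW = ∑ u ∈ Cd3 with wt u = j, comp i j (VV u) := by
  rw [WW_eq, map_sum, Finset.sum_filter]
  refine Finset.sum_congr rfl fun u _ => ?_
  split_ifs with h
  · rfl
  · rw [comp_VV, if_neg h]

/-! ### The MacWilliams identity -/

/-- The MacWilliams substitution in the variables `x₀, x₁, y, z`. -/
def mac : MvPolynomial (Fin 4) ℂ →ₐ[ℂ] MvPolynomial (Fin 4) ℂ :=
  aeval ![X 2, X 3 - X 1, 3 * X 0, X 3 + 2 * X 1]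

lemma chi_sum (m m' card : ℕ) (h1 : ∀ k : ZMod 27, (m' : ZMod 27) * k = 0 →
      ∀ a : ZMod 27, (m : ZMod 27) * a = 0 → k * a = 0)
    (h2 : ∀ k : ZMod 27, (m' : ZMod 27) * k ≠ 0 →
      ∃ b : ZMod 27, (m : ZMod 27) * b = 0 ∧ k * b ≠ 0)
    (hc : (Finset.univ.filter fun a : ZMod 27 => (m : ZMod 27) * a = 0).card = card)
    (k : ZMod 27) :
    ∑ a : ZMod 27, (if (m : ZMod 27) * a = 0 then chi (k * a) else 0)
      = if (m' : ZMod 27) * k = 0 then (card : ℂ) else 0 := by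
  split_ifs with h
  · rw [← hc, ← Finset.sum_filter, Finset.cast_card]
    refine Finset.sum_congr rfl fun a ha => ?_
    rw [h1 k h a (by simpa using ha), AddChar.map_zero_eq_one]
  · obtain ⟨b, hb, hkb⟩ := h2 k h
    set S := ∑ a : ZMod 27, (if (m : ZMod 27) * a = 0 then chi (k * a) else 0) with hS
    have e : S = chi (k * b) * S := by
      conv_lhs => rw [hS, ← Equiv.sum_comp (Equiv.addRight b)]
      rw [hS, Finset.mul_sum]
      refine Finset.sum_congr rfl fun a _ => ?_
      simp only [Equiv.coe_addRight, mul_add, hb, add_zero]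
      split_ifs
      · rw [AddChar.map_add_eq_mul, mul_comm]
      · simp
    have hne : chi (k * b) ≠ 1 := fun h => hkb (chi_inj (by rw [h, AddChar.map_zero_eq_one]))
    have : (chi (k * b) - 1) * S = 0 := by linear_combination -e
    exact (mul_eq_zero.1 this).resolve_left (sub_ne_zero.2 hne)

lemma ff_split (a : ZMod 27) : ff a = X 0 + (if 9 * a = 0 then X 1 - X 0 else 0)
    + (if 3 * a = 0 then X 3 - X 2 - X 1 else 0) + (if a = 0 then 3 * X 2 else 0) := by
  have h39 : 3 * a = 0 → 9 * a = 0 := fun h => by linear_combination 3 * h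
  unfold ff
  by_cases h0 : a = 0
  · subst h0; simp; ring
  · by_cases h3 : 3 * a = 0
    · simp [h0, h3, h39 h3]
    · by_cases h9 : 9 * a = 0 <;> simp [h0, h3, h9]

lemma mac_X (i : Fin 4) :
    mac (X i) = ![X 2, X 3 - X 1, 3 * X 0, X 3 + 2 * X 1] i := by
  simp [mac]

/-- The Fourier transform of `ff`. -/
lemma ff_fourier (k : ZMod 27) : ∑ a, C (chi (k * a)) * ff a = 3 * mac (ff k) := by
  have s0 := chi_sum 0 1 27 (by decide) (by decide) (by decide) k
  have s9 := chi_sum 9 3 9 (by decide) (by decide) (by decide) k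
  have s3 := chi_sum 3 9 3 (by decide) (by decide) (by decide) k
  have s1 := chi_sum 1 0 1 (by decide) (by decide) (by decide) k
  simp only [Nat.cast_zero, Nat.cast_one, Nat.cast_ofNat, zero_mul, one_mul, if_true] at s0 s9 s3 s1
  have key : ∑ a, C (chi (k * a)) * ff a =
      C (∑ a : ZMod 27, chi (k * a)) * X 0
      + C (∑ a : ZMod 27, if 9 * a = 0 then chi (k * a) else 0) * (X 1 - X 0)
      + C (∑ a : ZMod 27, if 3 * a = 0 then chi (k * a) else 0) * (X 3 - X 2 - X 1)
      + C (∑ a : ZMod 27, if a = 0 then chi (k * a) else 0) * (3 * X 2) := by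
    simp only [map_sum, Finset.sum_mul, ← Finset.sum_add_distrib]
    refine Finset.sum_congr rfl fun a _ => ?_
    rw [ff_split]
    split_ifs <;> simp <;> ring
  rw [key, s0, s9, s3, s1, ff_split]
  have h39 : 3 * k = 0 → 9 * k = 0 := fun h => by linear_combination 3 * h
  simp only [map_add, apply_ite (mac : MvPolynomial (Fin 4) ℂ → _), map_sub, map_mul, map_zero,
    mac_X, map_ofNat, apply_ite (C : ℂ → MvPolynomial (Fin 4) ℂ), C_1]
  by_cases h0 : k = 0
  · subst h0; simp; ring
  · by_cases h3 : 3 * k = 0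
    · simp [h0, h3, h39 h3]; ring
    · by_cases h9 : 9 * k = 0
      · simp [h0, h3, h9]; ring
      · simp [h0, h3, h9]

lemma ff_unit {l : ZMod 27} (hl : IsUnit l) (c : ZMod 27) : ff (l * c) = ff c := by
  have h1 : l * c = 0 ↔ c = 0 := hl.mul_right_eq_zero
  have h3 : 3 * (l * c) = 0 ↔ 3 * c = 0 := by
    rw [mul_left_comm]; exact hl.mul_right_eq_zero
  have h9 : 9 * (l * c) = 0 ↔ 9 * c = 0 := by
    rw [mul_left_comm]; exact hl.mul_right_eq_zero
  simp only [ff, h1, h3, h9]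

/-- The diagonal weights of the form on all coordinates. -/
def ee (j : Fin 24) : ZMod 27 := if j = 23 then 7 else 1

lemma ee_unit (j : Fin 24) : IsUnit (ee j) := by
  unfold ee
  split_ifs
  · exact IsUnit.of_mul_eq_one 4 (by decide)
  · exact isUnit_one

lemma ee_lft : ∀ i, ee (lft i) = 1 := by decide

lemma ee_rgt : ∀ k, ee (rgt k) = (eps k : ZMod 27) := by decide

lemma form_ee (c d : Fin 24 → ZMod 27) : form 27 c d = ∑ j, ee j * c j * d j := by
  rw [sum24]; simp only [form, ee_lft, ee_rgt, one_mul]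

lemma form_add_left (c d a : Fin 24 → ZMod 27) :
    form 27 (c + d) a = form 27 c a + form 27 d a := by
  simp only [form_ee, Pi.add_apply, ← Finset.sum_add_distrib]
  exact Finset.sum_congr rfl fun j _ => by ring

lemma chi_sum_eq_prod (f : Fin 24 → ZMod 27) : chi (∑ j, f j) = ∏ j, chi (f j) :=
  map_prod chi.toMonoidHom (fun j => Multiplicative.ofAdd (f j)) Finset.univ

lemma card_Cd : Cd.card = 27 ^ 12 := by
  have hinj : Function.Injective (enc 27) := by
    intro r s h
    funext i
    have := congrFun h (lft i)
    simpa using this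
  have : Cd = Finset.univ.image (enc 27) := by
    ext c
    rw [mem_Cd, Finset.mem_image]
    refine ⟨fun h => ⟨_, Finset.mem_univ _, h.eq_enc.symm⟩, ?_⟩
    rintro ⟨r, _, rfl⟩
    exact inCode_enc _ _
  rw [this, Finset.card_image_of_injective _ hinj, Finset.card_univ, Fintype.card_fun,
    ZMod.card, Fintype.card_fin]

/-- Orthogonality of characters on the self-dual code. -/
lemma sum_chi_form (a : Fin 24 → ZMod 27) :
    ∑ c ∈ Cd, chi (form 27 c a) = if InCode 27 a then 27 ^ 12 else 0 := by
  split_ifs with h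
  · have : ∀ c ∈ Cd, chi (form 27 c a) = 1 := fun c hc => by
      rw [mem_Cd] at hc
      rw [form_eq_zero dvd_rfl hc h, AddChar.map_zero_eq_one]
    rw [Finset.sum_congr rfl this, Finset.sum_const, card_Cd, nsmul_eq_mul, mul_one]
    norm_num
  · have : ∃ d, InCode 27 d ∧ form 27 d a ≠ 0 := by
      by_contra! hh
      exact h (inCode_of_form dvd_rfl hh)
    obtain ⟨d, hd, hne⟩ := this
    set S := ∑ c ∈ Cd, chi (form 27 c a) with hS
    have e : chi (form 27 d a) * S = S := by
      rw [hS, Finset.mul_sum]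
      refine Finset.sum_equiv (Equiv.addRight d) ?_ ?_
      · intro c
        rw [mem_Cd, mem_Cd, Equiv.coe_addRight]
        refine ⟨fun hc => hc.add hd, fun hc => ?_⟩
        have := hc.sub hd
        rwa [add_sub_cancel_right] at this
      · intro c _
        rw [← AddChar.map_add_eq_mul, Equiv.coe_addRight, form_add_left, add_comm]
    have hn : chi (form 27 d a) ≠ 1 := fun h => hne (chi_inj (by rw [h, AddChar.map_zero_eq_one]))
    have : (chi (form 27 d a) - 1) * S = 0 := by linear_combination e
    exact (mul_eq_zero.1 this).resolve_left (sub_ne_zero.2 hn)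

/-- The MacWilliams identity for the self-dual code. -/
lemma mac_WW : mac WW = 3 ^ 12 * WW := by
  have h1 : ∀ c : Fin 24 → ZMod 27, 3 ^ 24 * mac (∏ j, ff (c j)) =
      ∑ a : Fin 24 → ZMod 27, C (chi (form 27 c a)) * ∏ j, ff (a j) := by
    intro c
    have e1 : (3 : MvPolynomial (Fin 4) ℂ) ^ 24 = ∏ j : Fin 24, 3 := by simp
    rw [e1, map_prod, ← Finset.prod_mul_distrib]
    have e2 : ∀ j, 3 * mac (ff (c j)) = ∑ a, C (chi (ee j * c j * a)) * ff a := fun j => by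
      rw [ff_fourier, ff_unit (ee_unit j)]
    simp only [e2]
    rw [Finset.prod_univ_sum, Fintype.piFinset_univ]
    refine Finset.sum_congr rfl fun a _ => ?_
    rw [Finset.prod_mul_distrib, ← map_prod, form_ee, chi_sum_eq_prod]
  have h2 : 3 ^ 24 * mac WW = 27 ^ 12 * WW := by
    rw [WW, map_sum, Finset.mul_sum, Finset.sum_congr rfl fun c _ => h1 c, Finset.sum_comm,
      Finset.mul_sum]
    simp only [← Finset.sum_mul, ← map_sum, sum_chi_form]
    rw [← Finset.sum_subset (Finset.subset_univ Cd)]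
    · refine Finset.sum_congr rfl fun a ha => ?_
      rw [mem_Cd] at ha
      rw [if_pos ha, C_pow]
      exact congrArg (· ^ 12 * _) (map_ofNat C 27)
    · intro a _ ha
      rw [mem_Cd] at ha
      rw [if_neg ha]
      simp
  have h3 : (3 : MvPolynomial (Fin 4) ℂ) ^ 24 ≠ 0 := by
    rw [show (3 : MvPolynomial (Fin 4) ℂ) = C 3 from (map_ofNat C 3).symm, ← C_pow, Ne, C_eq_zero]
    norm_num
  apply mul_left_cancel₀ h3
  rw [h2]; ring

lemma monomial_hom (d : Fin 4 →₀ ℕ) (a : ℂ) :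
    IsWeightedHomogeneous wts (monomial d a) (d 0, d 2) := by
  apply isWeightedHomogeneous_monomial
  rw [Finsupp.weight_apply, Finsupp.sum_fintype _ _ (by simp), Fin.sum_univ_four]
  simp [wts]

lemma mac_monomial_hom (d : Fin 4 →₀ ℕ) (a : ℂ) :
    IsWeightedHomogeneous wts (mac (monomial d a)) (d 2, d 0) := by
  have hX : ∀ i : Fin 4, IsWeightedHomogeneous wts (X i : MvPolynomial (Fin 4) ℂ) (wts i) :=
    fun i => isWeightedHomogeneous_X ℂ wts i
  have c3 : (3 : MvPolynomial (Fin 4) ℂ) = C 3 := (map_ofNat C 3).symm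
  have c2 : (2 : MvPolynomial (Fin 4) ℂ) = C 2 := (map_ofNat C 2).symm
  rw [mac, aeval_monomial, Finsupp.prod_fintype _ _ (by simp), Fin.prod_univ_four]
  have h0 : IsWeightedHomogeneous wts (X 2 : MvPolynomial (Fin 4) ℂ) (0, 1) := hX 2
  have h1 : IsWeightedHomogeneous wts (X 3 - X 1 : MvPolynomial (Fin 4) ℂ) (0, 0) :=
    (hX 3).sub (hX 1)
  have h2 : IsWeightedHomogeneous wts (3 * X 0 : MvPolynomial (Fin 4) ℂ) (1, 0) := by
    rw [c3]; exact (hX 0).C_mul 3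
  have h3 : IsWeightedHomogeneous wts (X 3 + 2 * X 1 : MvPolynomial (Fin 4) ℂ) (0, 0) := by
    rw [c2]; exact (hX 3).add ((hX 1).C_mul 2)
  have := (((((h0.pow (d 0)).mul (h1.pow (d 1))).mul (h2.pow (d 2))).mul (h3.pow (d 3)))).C_mul a
  convert this using 1
  · rfl
  · rw [Prod.ext_iff]
    simp

/-- The MacWilliams substitution exchanges the two degrees. -/
lemma mac_comp (i j : ℕ) (P : MvPolynomial (Fin 4) ℂ) : mac (comp i j P) = comp j i (mac P) := by
  induction P using MvPolynomial.induction_on' with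
  | monomial d a =>
    rw [comp_of_hom (monomial_hom d a), comp_of_hom (mac_monomial_hom d a)]
    split_ifs <;> simp
  | add p q hp hq => simp only [map_add, hp, hq]

lemma mac_comp_WW (i j : ℕ) : mac (comp i j WW) = 3 ^ 12 * comp j i WW := by
  have c3 : (3 : MvPolynomial (Fin 4) ℂ) ^ 12 = C (3 ^ 12) := by
    rw [C_pow]; exact congrArg (· ^ 12) (map_ofNat C 3).symm
  rw [mac_comp, mac_WW, c3, weightedHomogeneousComponent_C_mul]

/-! ### Which bidegrees occur -/

/-- A nonzero component of bidegree `(i, j)` comes from a pair of words. -/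
lemma exists_of_comp_WW {i j : ℕ} (h : comp i j WW ≠ 0) :
    ∃ (u : Fin 24 → ZMod 3) (c : Fin 24 → ZMod 27), InCode 3 u ∧ InCode 27 c ∧ wt u = j ∧
      n0 c = i ∧ ∀ l, u l ≠ 0 → 3 * c l = 0 := by
  rw [comp_WW] at h
  obtain ⟨u, hu, h⟩ := Finset.exists_ne_zero_of_sum_ne_zero h
  rw [Finset.mem_filter, mem_Cd3] at hu
  rw [comp_VV, if_pos hu.2] at h
  obtain ⟨c, hc, h⟩ := Finset.exists_ne_zero_of_sum_ne_zero h
  rw [Finset.mem_filter, mem_Cd] at hc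
  refine ⟨u, c, hu.1, hc.1, hu.2, hc.2, fun l hl => ?_⟩
  by_contra h3
  exact h (Finset.prod_eq_zero (Finset.mem_univ l) (by rw [kk, if_neg hl, if_neg h3]))

lemma n0_eq_wt (c : Fin 24 → ZMod 27) : n0 c = wt (fun j => red (c j)) := by
  simp only [n0, wt, nine_mul_eq_zero_iff]

lemma three_dvd_wt {u : Fin 24 → ZMod 3} (hu : InCode 3 u) : 3 ∣ wt u := by
  have e := form_eq_zero (by norm_num) hu hu
  rw [form_three] at e
  rw [← ZMod.natCast_eq_zero_iff, wt, Nat.cast_sum]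
  refine Eq.trans (Finset.sum_congr rfl fun j _ => ?_) e
  have : ∀ t : ZMod 3, ((if t = 0 then 0 else 1 : ℕ) : ZMod 3) = t * t := by decide
  convert this (u j)

lemma wt_add_n0_le {u : Fin 24 → ZMod 3} {c : Fin 24 → ZMod 27}
    (h : ∀ l, u l ≠ 0 → 3 * c l = 0) : n0 c + wt u ≤ 24 := by
  rw [n0, wt, ← Finset.sum_add_distrib]
  calc _ ≤ ∑ j : Fin 24, 1 := Finset.sum_le_sum fun j _ => ?_
    _ = 24 := by simp
  by_cases hu : u j = 0
  · rw [if_pos hu]; split_ifs <;> simp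
  · have h9 : 9 * c j = 0 := by linear_combination 3 * h j hu
    rw [if_pos h9, if_neg hu]

/-! ### Packed words and exhaustive walks

Words are packed into natural numbers in some base, and the exhaustive searches are folds over
such numbers written with recursors and primitive arithmetic, so that the kernel evaluates them
quickly. -/

/-- The sum of `g (i + j) d_j` over the lowest `n` digits `d_j` of `P` in base `B`. -/
def digSum (B : ℕ) (g : ℕ → ℕ → ℕ) (n : ℕ) : ℕ → ℕ → ℕ :=
  Nat.rec (fun _ _ => 0)
    (fun _ ih i P => Nat.add (g i (Nat.mod P B)) (ih (Nat.succ i) (Nat.div P B))) n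

/-- The natural number with digits `v` in base `B`. -/
def pack (B : ℕ) {n : ℕ} (v : Fin n → ℕ) : ℕ := ∑ j, v j * B ^ (j : ℕ)

lemma digSum_pack {B : ℕ} (g : ℕ → ℕ → ℕ) {n : ℕ} (v : Fin n → ℕ) (hv : ∀ j, v j < B) (i : ℕ) :
    digSum B g n i (pack B v) = ∑ j : Fin n, g (i + j) (v j) := by
  induction n generalizing i with
  | zero => simp [digSum]
  | succ n ih =>
    have hB : 0 < B := lt_of_le_of_lt (Nat.zero_le _) (hv 0)
    have e : pack B v = v 0 + B * pack B (fun j => v (Fin.succ j)) := by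
      rw [pack, pack, Fin.sum_univ_succ, Finset.mul_sum]
      simp only [Fin.val_zero, pow_zero, mul_one, Fin.val_succ]
      congr 1
      exact Finset.sum_congr rfl fun j _ => by ring
    have h0 : pack B v % B = v 0 := by
      rw [e, Nat.add_mul_mod_self_left, Nat.mod_eq_of_lt (hv 0)]
    have h1 : pack B v / B = pack B (fun j => v (Fin.succ j)) := by
      rw [e, Nat.add_mul_div_left _ _ hB, Nat.div_eq_of_lt (hv 0), zero_add]
    calc digSum B g (n + 1) i (pack B v)
        = g i (pack B v % B) + digSum B g n (i + 1) (pack B v / B) := rfl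
      _ = _ := by
        rw [h0, h1, ih _ (fun j => hv _), Fin.sum_univ_succ]
        simp only [Fin.val_zero, add_zero, Fin.val_succ]
        congr 1
        exact Finset.sum_congr rfl fun j _ => by rw [add_assoc, add_comm 1]

lemma pack_add (B : ℕ) {n : ℕ} (v w : Fin n → ℕ) : pack B v + pack B w = pack B (fun j => v j + w j) := by
  simp only [pack, add_mul, Finset.sum_add_distrib]

lemma pack_mul (B : ℕ) {n : ℕ} (a : ℕ) (v : Fin n → ℕ) : a * pack B v = pack B (fun j => a * v j) := by
  simp only [pack, Finset.mul_sum, mul_assoc]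

lemma pack_sum (B : ℕ) {ι : Type*} (s : Finset ι) {n : ℕ} (v : ι → Fin n → ℕ) :
    ∑ i ∈ s, pack B (v i) = pack B (fun j => ∑ i ∈ s, v i j) := by
  simp only [pack, Finset.sum_mul]
  exact Finset.sum_comm

/-- The sum of `F (acc + ∑ r_i * row_i)` over all ternary vectors `r` with at most `k` nonzero
entries. -/
def walk (F : ℕ → ℕ) (rows : List ℕ) (k acc : ℕ) : ℕ :=
  List.rec (fun _ acc => F acc)
    (fun r _ ih k acc => Nat.rec (F acc) (fun k' _ => Nat.add (ih (Nat.succ k') acc)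
      (Nat.add (ih k' (Nat.add acc r)) (ih k' (Nat.add acc (Nat.mul 2 r))))) k) rows k acc

lemma walk_zero (F : ℕ → ℕ) (rows : List ℕ) (acc : ℕ) : walk F rows 0 acc = F acc := by
  cases rows <;> rfl

/-- The number of nonzero entries of a ternary vector. -/
def wtn {n : ℕ} (r : Fin n → ZMod 3) : ℕ := ∑ i, if r i = 0 then 0 else 1

lemma walk_eq (F : ℕ → ℕ) {n : ℕ} (row : Fin n → ℕ) (k acc : ℕ) :
    walk F (List.ofFn row) k acc
      = ∑ r : Fin n → ZMod 3, if wtn r ≤ k then F (acc + ∑ i, (r i).val * row i) else 0 := by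
  induction n generalizing k acc with
  | zero => simp [walk, wtn]
  | succ n ih =>
    have hsum : ∀ f : (Fin (n + 1) → ZMod 3) → ℕ, ∑ r, f r
        = ∑ r : Fin n → ZMod 3, f (Fin.cons 0 r) + ∑ r : Fin n → ZMod 3, f (Fin.cons 1 r)
          + ∑ r : Fin n → ZMod 3, f (Fin.cons 2 r) := by
      intro f
      rw [← (Fin.consEquiv fun _ : Fin (n + 1) => ZMod 3).sum_comp, Fintype.sum_prod_type,
        sum_zmod3]
      rfl
    have w0 : ∀ (t : ZMod 3) (r : Fin n → ZMod 3),
        wtn (Fin.cons t r : Fin (n + 1) → ZMod 3) = (if t = 0 then 0 else 1) + wtn r := by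
      intro t r
      simp only [wtn, Fin.sum_univ_succ, Fin.cons_zero, Fin.cons_succ]
    have t1 : (1 : ZMod 3) ≠ 0 := by decide
    have t2 : (2 : ZMod 3) ≠ 0 := by decide
    have v1 : (1 : ZMod 3).val = 1 := rfl
    have v2 : (2 : ZMod 3).val = 2 := rfl
    rw [hsum]
    simp only [w0, Fin.sum_univ_succ, Fin.cons_zero, Fin.cons_succ, t1, t2, if_false, if_true,
      v1, v2, ZMod.val_zero, zero_mul, zero_add, one_mul, List.ofFn_succ]
    cases k with
    | zero =>
      have := ih (fun i => row (Fin.succ i)) 0 acc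
      rw [walk_zero] at this
      rw [walk_zero, this]
      have : ∀ m : ℕ, ¬ (1 + m ≤ 0) := by omega
      simp [this]
    | succ k =>
      have e : walk F (row 0 :: List.ofFn fun i => row (Fin.succ i)) (k + 1) acc
          = walk F (List.ofFn fun i => row (Fin.succ i)) (k + 1) acc
            + (walk F (List.ofFn fun i => row (Fin.succ i)) k (acc + row 0)
            + walk F (List.ofFn fun i => row (Fin.succ i)) k (acc + 2 * row 0)) := rfl
      rw [e, ih, ih, ih, add_assoc]
      have : ∀ m : ℕ, 1 + m ≤ k + 1 ↔ m ≤ k := by omega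
      simp only [this, add_assoc]

lemma digits_unique {B : ℕ} (T : ℕ) (m l : ℕ → ℕ) (hm : ∀ t, m t < B) (hl : ∀ t, l t < B)
    (h : ∑ t ∈ Finset.range T, m t * B ^ t = ∑ t ∈ Finset.range T, l t * B ^ t) :
    ∀ t < T, m t = l t := by
  induction T generalizing m l with
  | zero => intro t ht; omega
  | succ T ih =>
    have e : ∀ f : ℕ → ℕ, ∑ t ∈ Finset.range (T + 1), f t * B ^ t
        = f 0 + B * ∑ t ∈ Finset.range T, f (t + 1) * B ^ t := by
      intro f
      rw [Finset.sum_range_succ', Finset.mul_sum, pow_zero, mul_one, add_comm]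
      exact congrArg (f 0 + ·) (Finset.sum_congr rfl fun t _ => by rw [pow_succ]; ring)
    rw [e, e] at h
    have h0 : m 0 = l 0 := by
      have := congrArg (· % B) h
      simpa only [Nat.add_mul_mod_self_left, Nat.mod_eq_of_lt (hm 0), Nat.mod_eq_of_lt (hl 0)]
        using this
    have hB : 0 < B := lt_of_le_of_lt (Nat.zero_le _) (hm 0)
    rw [h0] at h
    have h1 := Nat.eq_of_mul_eq_mul_left hB (Nat.add_left_cancel h)
    intro t ht
    cases t with
    | zero => exact h0
    | succ t => exact ih _ _ (fun t => hm _) (fun t => hl _) h1 t (by omega)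

lemma digits_unique_fin {B n : ℕ} (m l : Fin n → ℕ) (hB : 0 < B) (hm : ∀ t, m t < B)
    (hl : ∀ t, l t < B)
    (h : ∑ t, m t * B ^ (t : ℕ) = ∑ t, l t * B ^ (t : ℕ)) : m = l := by
  have e : ∀ f : Fin n → ℕ, ∑ t, f t * B ^ (t : ℕ)
      = ∑ t ∈ Finset.range n, (if h : t < n then f ⟨t, h⟩ else 0) * B ^ t := by
    intro f
    rw [Finset.sum_range]
    exact Finset.sum_congr rfl fun t _ => by simp
  rw [e, e] at h
  have := digits_unique n _ _ (fun t => by split_ifs; exacts [hm _, hB])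
    (fun t => by split_ifs; exacts [hl _, hB]) h
  funext t
  simpa using this t t.2

/-- If the sum of `B ^ idx q` has the base-`B` expansion recorded by `L`, then `L` is the histogram
of `idx`. -/
lemma histogram {ι : Type*} {M : Type} [AddCommMonoid M] (Q : Finset ι) (idx : ι → ℕ) (L : List (ℕ × ℕ))
    {B : ℕ} (hQ : Q.card < B) (hL : (L.map Prod.snd).sum < B)
    (h : ∑ q ∈ Q, B ^ idx q = (L.map fun p => p.2 * B ^ p.1).sum) (f : ℕ → M) :
    ∑ q ∈ Q, f (idx q) = (L.map fun p => p.2 • f p.1).sum := by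
  obtain ⟨T, hT1, hT2⟩ : ∃ T, (∀ q ∈ Q, idx q < T) ∧ ∀ p ∈ L, p.1 < T := by
    refine ⟨Q.sup idx + (L.map Prod.fst).sum + 1, fun q hq => ?_, fun p hp => ?_⟩
    · have := Finset.le_sup (f := idx) hq
      omega
    · have := List.le_sum_of_mem (List.mem_map_of_mem (f := Prod.fst) hp)
      omega
  let l : List (ℕ × ℕ) → ℕ → ℕ := fun L t => (L.map fun p => if p.1 = t then p.2 else 0).sum
  have hl : ∀ L t, l L t ≤ (L.map Prod.snd).sum := by
    intro L t
    refine List.sum_le_sum fun p _ => ?_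
    split_ifs <;> simp
  have key1 : ∀ {M : Type} [AddCommMonoid M] (f : ℕ → M), ∑ q ∈ Q, f (idx q)
      = ∑ t ∈ Finset.range T, (Q.filter fun q => idx q = t).card • f t := by
    intro M _ f
    rw [← Finset.sum_fiberwise_of_maps_to (g := idx) (t := Finset.range T)
      (fun q hq => Finset.mem_range.2 (hT1 q hq))]
    refine Finset.sum_congr rfl fun t _ => ?_
    rw [← Finset.sum_const]
    exact Finset.sum_congr rfl fun q hq => by rw [(Finset.mem_filter.1 hq).2]
  have key2 : ∀ {M : Type} [AddCommMonoid M] (f : ℕ → M) (L : List (ℕ × ℕ)),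
      (∀ p ∈ L, p.1 < T) → (L.map fun p => p.2 • f p.1).sum
      = ∑ t ∈ Finset.range T, l L t • f t := by
    intro M _ f L hL
    induction L with
    | nil => simp [l]
    | cons p L ih =>
      have hp := hL p (by simp)
      rw [List.map_cons, List.sum_cons, ih fun q hq => hL q (by simp [hq])]
      have : ∀ t, l (p :: L) t = (if p.1 = t then p.2 else 0) + l L t := fun t => by simp [l]
      simp only [this, add_smul, Finset.sum_add_distrib]
      congr 1
      simp only [ite_smul, zero_smul, Finset.sum_ite_eq, Finset.mem_range, hp, if_true]
  have h1 := key1 (fun t => B ^ t)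
  have h2 := key2 (fun t => B ^ t) L hT2
  simp only [smul_eq_mul] at h1 h2
  rw [h1, h2] at h
  have h3 := digits_unique T _ _ (fun t => lt_of_le_of_lt (Finset.card_filter_le _ _) hQ)
    (fun t => lt_of_le_of_lt (hl L t) hL) h
  rw [key1, key2 f L hT2]
  exact Finset.sum_congr rfl fun t ht => by rw [h3 t (Finset.mem_range.1 ht)]

/-! ### Words of small weight in the ternary code -/

/-- The packed rows of the ternary generator matrix `[I | A]`. -/
def rowsL : List ℕ :=
  [348534235098102336023650148737190216073345,
   20769188672381728846381701789126720,
   85070596802075561354779450528263045120,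
   697068428647683647508853960420370778423360,
   85070601871439719996939048453279056000,
   697068449411802955127257529675255195893824,
   170182726905939915988035674138235633792,
   348449185275559554889834182089489594712192,
   348619326459096757061335987064374206922752,
   696898287788744208117859043573950824054912,
   696899658230596307351694775932563860488192,
   702512988056794769142854516811561091203072]

/-- The packed rows of the ternary generator matrix `[-Aᵀ | I]`. -/
def rowsR : List ℕ :=
  [324518573005964513224714090455105,
   1329228075032430646168428914504110080,
   5444518195332835926705884833808834887680,
   1329228154241245624952172632082485250,
   5444518519772142079804099101009859584000,
   2659105107905311187313057408409931778,
   10891694521980154623234283144847080562688,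
   10890365293985626687981170163879218520065,
   5445847428399203905400959177063978237953,
   5445867867997481980649462145493086773250,
   5529588462544478198517621675752735899650,
   353894991150448835586865131584149245657090]

/-- Base-`3` values of the normalized words of weight nine. -/
def keys : List ℕ :=
  [126315082962, 251467903647, 95705832150, 191392473375, 105600007962, 209908607733, 129470242536,
   258897359619, 96568406712, 189520888617, 116398347048, 201415614777, 170857225356, 247571271633,
   125525716950, 251049308109, 94416518364, 188445614043, 102413995896, 194366044185, 108094158288,
   216183354273, 24694508887, 17577431168, 72156992275, 36078584726, 20921197999, 10460599370,
   63054412471, 31535177852, 9311203549, 4655606150, 21968299123, 11005672964, 70929344359,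
   37210455866, 13268429857, 22905875468, 52560084061, 73351660970, 69820364449, 34975018028,
   3228987421, 1808213798, 11753467634, 23506758037, 45723589814, 91442395927, 32165724596,
   63154838815, 187288364, 374511115, 4897767548, 9623348209, 16271735006, 29056665925,
   52317768710, 73254477565, 64316761556, 34490344255, 10595183948, 21189836443, 35184585764,
   69980156713, 8150423420, 5840491447, 224445610036, 166461683321, 202233731560, 122037926603,
   219797679616, 157164228419, 191779166758, 101127200525, 188420874976, 94412211203, 191790682822,
   101147046113, 190245839698, 96895098479, 200685449422, 117779041847, 230620455640, 178682175587,
   220915984312, 159273272297, 198933437080, 115437317753, 45360106290, 90672382863, 34538055378,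
   64427064879, 22214988558, 13047264135, 77316695424, 60361069671, 34868292408, 69736033611,
   319101204, 245998707, 9045132642, 6467650587, 13952081040, 27903925875, 31482626598,
   62834517981, 1187962608, 2361554439, 12144494322, 24288981759, 98802888534, 197589814155,
   104662587024, 209325165057, 127102625082, 254162203335, 106936223496, 210380879613, 147393037782,
   262241160165, 160406655888, 226670071713, 95521618818, 190913565951, 108351799506, 216311375871,
   133277490426, 254932365939, 94145641650, 188291047077, 94764966018, 189400791135, 38829441666,
   67067795643, 134784324, 269369631, 3663757872, 7327514691, 3513955734, 7008779565,
   1953109428, 2743950819, 12044618442, 24044536791, 44256835488, 84897744225, 52359885594,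
   73338691815, 64071243000, 33994523961, 16013734632, 30864676329, 45588170292, 90788861037,
   48867775824, 87260842977, 31541329530, 63039428631, 6356744244, 9183656637, 26870798610,
   18859404303, 87214314738, 48904384479, 63183972078, 32181187167, 2587963446, 1301190561,
   28214736354, 14200639407, 70914019566, 37224329955, 12025388466, 24050067615, 43271541450,
   86141312775]

/-- The interleaving of the two halves: digit `i` of a packed word is its coordinate `sig i`. -/
def sig (i : ℕ) : ℕ := Nat.add (Nat.div i 2) (Nat.mul 12 (Nat.mod i 2))

/-- The weight modulo `3` of a packed word. -/
def wtP (P : ℕ) : ℕ := digSum 64 (fun _ d => Nat.div (Nat.succ (Nat.mod d 3)) 2) 24 0 P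

/-- The translation `i ↦ i + b` of `ℤ/23ℤ ∪ {∞}`. -/
def posN (b i : ℕ) : ℕ := cond (Nat.beq i 23) 23 (Nat.mod (Nat.add i b) 23)

/-- The base-`3` value of the translate by `b` of a packed word. -/
def keyP (b P : ℕ) : ℕ :=
  digSum 64 (fun i d => Nat.mul (Nat.mod d 3) (Nat.pow 3 (posN b (sig i)))) 24 0 P

/-- Evaluation of `f w` with `w` in normal form. -/
def force (f : ℕ → ℕ) (w : ℕ) : ℕ := Nat.rec (f 0) (fun n _ => f (Nat.succ n)) w

lemma force_eq (f : ℕ → ℕ) (w : ℕ) : force f w = f w := by cases w <;> rfl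

/-- Membership in a list of natural numbers. -/
def memN (x : ℕ) (l : List ℕ) : Bool :=
  List.rec false (fun y _ ih => cond (Nat.beq x y) true ih) l

lemma mem_of_memN {x : ℕ} {l : List ℕ} (h : memN x l = true) : x ∈ l := by
  induction l with
  | nil => exact absurd h (by simp [memN])
  | cons y l ih =>
    have e : memN x (y :: l) = cond (Nat.beq x y) true (memN x l) := rfl
    rw [e] at h
    cases hb : Nat.beq x y with
    | true => simp [Nat.eq_of_beq_eq_true hb]
    | false => rw [hb] at h; exact List.mem_cons_of_mem _ (ih h)

/-- The sum of the finite positions of the support. -/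
def posSum (P : ℕ) : ℕ :=
  digSum 64 (fun i d => Nat.mul (Nat.mod (sig i) 23) (Nat.div (Nat.succ (Nat.mod d 3)) 2)) 24 0 P

/-- A translation which makes the sum of the finite positions of the support vanish modulo `23`,
for a word of weight nine. -/
def normShift (P : ℕ) : ℕ :=
  Nat.sub 23 (Nat.mod (Nat.mul (posSum P)
    (cond (Nat.beq (Nat.mod (Nat.div P (Nat.pow 64 23)) 3) 0) 18 3)) 23)

/-- The leaf of the search: `1` at a recognized word of weight nine, `0` at the zero word and at
words of weight at least ten, and a large value at anything else. -/
def leaf (P : ℕ) : ℕ :=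
  force (fun w => cond (Nat.beq w 9)
    (force (fun b => force (fun k => cond (memN k keys) 1 1000000) (keyP b P)) (normShift P))
    (cond (Nat.beq w 0) 0 (cond (Nat.ble 10 w) 0 1000000))) (wtP P)

/-! #### Soundness of the search -/

lemma Orb.shiftN {r u : Fin 24 → ZMod 3} (h : Orb r u) (a : ℕ) :
    Orb r (fun j => u (aff a 1 j)) := by
  induction a with
  | zero =>
    have : ∀ j, aff 0 1 j = j := by decide
    simpa only [this] using h
  | succ a ih =>
    have e : ∀ j, aff a 1 (aff 1 1 j) = aff (a + 1) 1 j := by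
      intro j
      unfold aff
      by_cases hj : (j : ℕ) = 23
      · simp [hj]
      · have : (1 + 1 * (j : ℕ)) % 23 ≠ 23 := by omega
        simp only [hj, if_false, this, Fin.mk.injEq]
        omega
    have := ih.shift
    simpa only [e] using this

lemma Orb.multN {r u : Fin 24 → ZMod 3} (h : Orb r u) (b : ℕ) :
    Orb r (fun j => u (aff 0 (2 ^ b) j)) := by
  induction b with
  | zero =>
    have : ∀ j, aff 0 (2 ^ 0) j = j := by decide
    simpa only [this] using h
  | succ b ih =>
    have e : ∀ j, aff 0 (2 ^ b) (aff 0 2 j) = aff 0 (2 ^ (b + 1)) j := by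
      intro j
      unfold aff
      by_cases hj : (j : ℕ) = 23
      · simp [hj]
      · have : (0 + 2 * (j : ℕ)) % 23 ≠ 23 := by omega
        simp only [hj, if_false, this, Fin.mk.injEq]
        rw [pow_succ, zero_add, zero_add, zero_add, mul_assoc, Nat.mul_mod_mod]
    have := ih.mult
    simpa only [e] using this

/-- The entries of a representative of the words of weight nine. -/
def repN (j : Fin 24) : ℕ :=
  [1, 0, 0, 2, 0, 2, 0, 1, 1, 2, 2, 2, 0, 0, 0, 0, 0, 0, 0, 0, 0, 0, 0, 2].getD j 0

/-- A representative of the words of weight nine. -/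
def rep (j : Fin 24) : ZMod 3 := (repN j : ZMod 3)

/-- The image of the representative under a composite of automorphisms, as natural numbers. -/
def imgN (a a' b s : ℕ) (j : Fin 24) : ℕ :=
  s * (lamS (aff a' 1 (aff 0 (2 ^ b) j)) * repN (aff a 1 (invol (aff a' 1 (aff 0 (2 ^ b) j)))))

lemma orb_img (a a' b s : ℕ) (hs : s = 1 ∨ s = 2) :
    Orb rep (fun j => (imgN a a' b s j : ZMod 3)) := by
  have h := ((((Orb.refl (r := rep)).shiftN a).invol).shiftN a').multN b
  rcases hs with rfl | rfl
  · convert h using 1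
    funext j
    simp [imgN, rep]
  · convert h.neg using 1
    funext j
    simp [imgN, rep]

/-- The base-`3` value of `imgN`. -/
def imgKey (a a' b s : ℕ) : ℕ := ∑ j : Fin 24, imgN a a' b s j % 3 * 3 ^ (j : ℕ)

lemma keys_eq : keys = [(0, 10), (1, 19), (4, 19), (5, 15), (6, 2), (7, 3), (12, 13), (14, 7)].flatMap
    (fun p : ℕ × ℕ => (List.range 11).flatMap fun b =>
      [imgKey p.1 p.2 b 1, imgKey p.1 p.2 b 2]) := by
  decide +kernel

attribute [irreducible] keys

lemma exists_of_mem_flatMap {k : ℕ} {ps : List (ℕ × ℕ)} {bs : List ℕ}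
    (h : k ∈ ps.flatMap (fun p : ℕ × ℕ => bs.flatMap fun b =>
      [imgKey p.1 p.2 b 1, imgKey p.1 p.2 b 2])) :
    ∃ w : Fin 24 → ℕ, Orb rep (fun j => (w j : ZMod 3)) ∧ k = ∑ j, w j % 3 * 3 ^ (j : ℕ) := by
  rw [List.mem_flatMap] at h
  obtain ⟨p, _, h⟩ := h
  rw [List.mem_flatMap] at h
  obtain ⟨b, _, h⟩ := h
  rw [List.mem_cons, List.mem_singleton] at h
  rcases h with h | h
  · exact ⟨imgN p.1 p.2 b 1, orb_img p.1 p.2 b 1 (Or.inl rfl), h⟩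
  · exact ⟨imgN p.1 p.2 b 2, orb_img p.1 p.2 b 2 (Or.inr rfl), h⟩

lemma exists_of_mem_keys {k : ℕ} (h : k ∈ keys) :
    ∃ w : Fin 24 → ℕ, Orb rep (fun j => (w j : ZMod 3)) ∧ k = ∑ j, w j % 3 * 3 ^ (j : ℕ) := by
  rw [keys_eq] at h
  exact exists_of_mem_flatMap h

/-- The interleaving of coordinates as a permutation. -/
def sigF (i : Fin 24) : Fin 24 := ⟨sig i, by
  change (i : ℕ) / 2 + 12 * ((i : ℕ) % 2) < 24
  omega⟩

lemma sigF_bij : Function.Bijective sigF :=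
  Finite.injective_iff_bijective.1 (by decide +kernel)

lemma sum_sig {M : Type*} [AddCommMonoid M] (f : Fin 24 → M) : ∑ i, f (sigF i) = ∑ j, f j :=
  (Equiv.ofBijective _ sigF_bij).sum_comp f

/-- The packed form of a word. -/
def packS (w : Fin 24 → ℕ) : ℕ := pack 64 (fun i => w (sigF i))

lemma natCast3_eq_zero (d : ℕ) : (d : ZMod 3) = 0 ↔ d % 3 = 0 := by
  rw [ZMod.natCast_eq_zero_iff, Nat.dvd_iff_mod_eq_zero]

lemma wtP_pack (w : Fin 24 → ℕ) (hw : ∀ j, w j < 64) :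
    wtP (packS w) = wt (fun j => (w j : ZMod 3)) := by
  rw [wtP, packS, digSum_pack _ _ fun j => hw _, wt,
    sum_sig (fun j => Nat.div (Nat.succ (Nat.mod (w j) 3)) 2)]
  refine Finset.sum_congr rfl fun j _ => ?_
  change (w j % 3 + 1) / 2 = _
  simp only [natCast3_eq_zero]
  split_ifs <;> omega

lemma aff_eq_posN (b : ℕ) (j : Fin 24) : ((aff b 1 j : Fin 24) : ℕ) = posN b j := by
  unfold aff posN
  by_cases hj : (j : ℕ) = 23
  · rw [if_pos hj, hj]; rfl
  · have : Nat.beq j 23 = false := by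
      rw [← Bool.not_eq_true]; exact fun h => hj (Nat.eq_of_beq_eq_true h)
    rw [if_neg hj, this]
    change (b + 1 * (j : ℕ)) % 23 = ((j : ℕ) + b) % 23
    rw [one_mul, add_comm]

lemma keyP_pack (b : ℕ) (w : Fin 24 → ℕ) (hw : ∀ j, w j < 64) :
    keyP b (packS w) = ∑ j, w j % 3 * 3 ^ (aff b 1 j : ℕ) := by
  rw [keyP, packS, digSum_pack _ _ fun j => hw _]
  simp only [aff_eq_posN]
  rw [← sum_sig (fun j : Fin 24 => w j % 3 * 3 ^ posN b j)]
  refine Finset.sum_congr rfl fun j _ => ?_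
  rw [zero_add]
  rfl

lemma aff_bij (b : ℕ) : Function.Bijective (aff b 1) := by
  apply Finite.injective_iff_bijective.1
  intro i j h
  have h' := congrArg Fin.val h
  unfold aff at h'
  apply Fin.ext
  split_ifs at h' <;> simp at h' <;> omega

lemma orb_of_key {b : ℕ} {w : Fin 24 → ℕ} (hw : ∀ j, w j < 64)
    (h : keyP b (packS w) ∈ keys) : Orb rep (fun j => (w j : ZMod 3)) := by
  obtain ⟨x, hx, hk⟩ := exists_of_mem_keys h
  rw [keyP_pack b w hw] at hk
  let e := Equiv.ofBijective _ (aff_bij b)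
  have h1 : ∑ j, w j % 3 * 3 ^ (aff b 1 j : ℕ) = ∑ j, w (e.symm j) % 3 * 3 ^ (j : ℕ) := by
    rw [← e.sum_comp (fun j : Fin 24 => w (e.symm j) % 3 * 3 ^ (j : ℕ))]
    refine Finset.sum_congr rfl fun j _ => ?_
    rw [e.symm_apply_apply]
    rfl
  rw [h1] at hk
  have h2 := digits_unique_fin _ _ (by norm_num) (fun t => Nat.mod_lt _ (by norm_num))
    (fun t => Nat.mod_lt _ (by norm_num)) hk
  convert hx.shiftN b using 1
  funext j
  have h3 := congrFun h2 (e j)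
  simp only [e.symm_apply_apply] at h3
  rw [ZMod.natCast_eq_natCast_iff']
  exact h3

lemma leaf_eq (P : ℕ) : leaf P = cond (Nat.beq (wtP P) 9)
    (cond (memN (keyP (normShift P) P) keys) 1 1000000)
    (cond (Nat.beq (wtP P) 0) 0 (cond (Nat.ble 10 (wtP P)) 0 1000000)) := by
  unfold leaf
  rw [force_eq, force_eq, force_eq]

lemma leaf_cases {n B l : ℕ} {b : Bool}
    (hl : l = cond (Nat.beq n 9) (cond b 1 B) (cond (Nat.beq n 0) 0 (cond (Nat.ble 10 n) 0 B)))
    (hB : l < B) :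
    (n = 0 ∨ 10 ≤ n ∨ n = 9 ∧ b = true) ∧ l = if n = 9 then 1 else 0 := by
  subst hl
  by_cases h9 : n = 9
  · have e9 : Nat.beq n 9 = true := by rw [h9]; rfl
    rw [e9] at hB ⊢
    rw [if_pos h9]
    cases b with
    | true => exact ⟨Or.inr (Or.inr ⟨h9, rfl⟩), rfl⟩
    | false => exact absurd hB (lt_irrefl _)
  · have e9 : Nat.beq n 9 = false := by
      rw [← Bool.not_eq_true]; exact fun h => h9 (Nat.eq_of_beq_eq_true h)
    rw [e9] at hB ⊢
    rw [if_neg h9]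
    by_cases h0 : n = 0
    · subst h0; exact ⟨Or.inl rfl, rfl⟩
    · have e0 : Nat.beq n 0 = false := by
        rw [← Bool.not_eq_true]; exact fun h => h0 (Nat.eq_of_beq_eq_true h)
      rw [e0] at hB ⊢
      cases h10 : Nat.ble 10 n with
      | true => exact ⟨Or.inr (Or.inl (Nat.le_of_ble_eq_true h10)), rfl⟩
      | false => rw [h10] at hB; exact absurd hB (lt_irrefl _)

lemma leaf_spec {w : Fin 24 → ℕ} (hw : ∀ j, w j < 64) (hl : leaf (packS w) < 1000000) :
    (wt (fun j => (w j : ZMod 3)) = 0 ∨ 10 ≤ wt (fun j => (w j : ZMod 3)) ∨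
      wt (fun j => (w j : ZMod 3)) = 9 ∧ Orb rep (fun j => (w j : ZMod 3))) ∧
    leaf (packS w) = if wt (fun j => (w j : ZMod 3)) = 9 then 1 else 0 := by
  have h := leaf_cases (leaf_eq (packS w)) hl
  rw [wtP_pack w hw] at h
  obtain ⟨h1, h2⟩ := h
  refine ⟨?_, h2⟩
  rcases h1 with h1 | h1 | ⟨h1, h3⟩
  · exact Or.inl h1
  · exact Or.inr (Or.inl h1)
  · exact Or.inr (Or.inr ⟨h1, orb_of_key hw (mem_of_memN h3)⟩)

/-- The outcome of a search over the combinations of at most four of twelve rows. -/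
lemma walk_spec (row : Fin 12 → Fin 24 → ℕ) (hrow : ∀ i j, row i j < 3) {rows : List ℕ}
    (hrows : rows = List.ofFn fun i => packS (row i)) {N : ℕ} (hN : N < 1000000)
    (hwalk : walk leaf rows 4 0 = N) :
    (∀ r : Fin 12 → ZMod 3, wtn r ≤ 4 →
      wt (fun j => ∑ i, r i * (row i j : ZMod 3)) = 0 ∨
      10 ≤ wt (fun j => ∑ i, r i * (row i j : ZMod 3)) ∨
      wt (fun j => ∑ i, r i * (row i j : ZMod 3)) = 9 ∧
        Orb rep (fun j => ∑ i, r i * (row i j : ZMod 3))) ∧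
    (∑ r : Fin 12 → ZMod 3, if wtn r ≤ 4 then
      (if wt (fun j => ∑ i, r i * (row i j : ZMod 3)) = 9 then 1 else 0) else 0) = N := by
  rw [hrows, walk_eq] at hwalk
  have hP : ∀ r : Fin 12 → ZMod 3, 0 + ∑ i, (r i).val * packS (row i)
      = packS (fun j => ∑ i, (r i).val * row i j) := by
    intro r
    simp only [packS, pack_mul, pack_sum, zero_add]
  have hb : ∀ (r : Fin 12 → ZMod 3) j, ∑ i, (r i).val * row i j < 64 := by
    intro r j
    calc _ ≤ ∑ _i : Fin 12, 2 * 2 := Finset.sum_le_sum fun i _ =>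
          Nat.mul_le_mul (Nat.lt_succ_iff.1 (ZMod.val_lt (r i))) (Nat.lt_succ_iff.1 (hrow i j))
      _ < 64 := by simp
  have hc : ∀ r : Fin 12 → ZMod 3, (fun j => ((∑ i, (r i).val * row i j : ℕ) : ZMod 3))
      = fun j => ∑ i, r i * (row i j : ZMod 3) := by
    intro r; funext j; simp
  simp only [hP] at hwalk
  have hgood : ∀ r : Fin 12 → ZMod 3, wtn r ≤ 4 →
      leaf (packS (fun j => ∑ i, (r i).val * row i j)) < 1000000 := by
    intro r hr
    refine lt_of_le_of_lt ?_ hN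
    rw [← hwalk]
    refine le_trans (le_of_eq (if_pos hr).symm) (Finset.single_le_sum
      (f := fun r : Fin 12 → ZMod 3 => if wtn r ≤ 4 then
        leaf (packS (fun j => ∑ i, (r i).val * row i j)) else 0)
      (fun _ _ => Nat.zero_le _) (Finset.mem_univ r))
  refine ⟨fun r hr => ?_, ?_⟩
  · have := (leaf_spec (hb r) (hgood r hr)).1
    rwa [hc] at this
  · rw [← hwalk]
    refine Finset.sum_congr rfl fun r _ => ?_
    split_ifs with hr h9
    · have := (leaf_spec (hb r) (hgood r hr)).2
      rw [hc, if_pos h9] at this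
      exact this.symm
    · have := (leaf_spec (hb r) (hgood r hr)).2
      rw [hc, if_neg h9] at this
      exact this.symm
    · rfl

lemma walk_left : walk leaf rowsL 4 0 = 2024 := by decide +kernel

lemma walk_right : walk leaf rowsR 4 0 = 2024 := by decide +kernel

/-! #### The words of weight nine -/

/-- The generator matrix `[I | A]` modulo `3`. -/
def rowL (i : Fin 12) (j : Fin 24) : ℕ := gen i j % 3

/-- The generator matrix `[-Aᵀ | I]` modulo `3`. -/
def rowR (k : Fin 12) (j : Fin 24) : ℕ :=
  if h : (j : ℕ) < 12 then 2 * entA ⟨j, h⟩ k % 3 else if (j : ℕ) = 12 + k then 1 else 0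

lemma rowsL_eq : rowsL = List.ofFn fun i => packS (rowL i) := by decide +kernel

lemma rowsR_eq : rowsR = List.ofFn fun i => packS (rowR i) := by decide +kernel

lemma sum_rowL (r : Fin 12 → ZMod 3) : (fun j => ∑ i, r i * (rowL i j : ZMod 3)) = enc 3 r := by
  funext j
  rw [enc_eq_gen]
  simp only [rowL, ZMod.natCast_mod]

/-- The word with prescribed second half. -/
def encR (r : Fin 12 → ZMod 3) (j : Fin 24) : ZMod 3 := ∑ k, r k * (rowR k j : ZMod 3)

lemma encR_rgt (r : Fin 12 → ZMod 3) (l : Fin 12) : encR r (rgt l) = r l := by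
  have : ∀ k : Fin 12, rowR k (rgt l) = if l = k then 1 else 0 := by
    intro k
    simp [rowR, rgt, Fin.ext_iff]
  simp [encR, this]

lemma encR_lft (r : Fin 12 → ZMod 3) (i : Fin 12) :
    encR r (lft i) = - ∑ k, (entA i k : ZMod 3) * r k := by
  have : ∀ k : Fin 12, (rowR k (lft i) : ZMod 3) = - entA i k := by
    intro k
    have h2 : ((2 : ℕ) : ZMod 3) = -1 := by decide
    have h3 : rowR k (lft i) = 2 * entA i k % 3 := dif_pos i.2
    rw [h3, ZMod.natCast_mod, Nat.cast_mul, h2, neg_one_mul]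
  simp only [encR, this, ← Finset.sum_neg_distrib]
  exact Finset.sum_congr rfl fun k _ => by ring

lemma eps_cast (k : Fin 12) : (eps k : ZMod 3) = 1 := by
  unfold eps; split_ifs <;> decide

lemma inCode_encR (r : Fin 12 → ZMod 3) : InCode 3 (encR r) := by
  refine inCode_of_form (by norm_num) fun c hc => ?_
  rw [hc.eq_enc, form_enc]
  refine Finset.sum_eq_zero fun i _ => ?_
  simp only [encR_lft, encR_rgt, eps_cast, one_mul, neg_add_cancel, mul_zero]

lemma InCode.eq_encR {u : Fin 24 → ZMod 3} (h : InCode 3 u) :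
    u = encR (fun k => u (rgt k)) := by
  funext j
  revert j
  refine forall24 (fun i => ?_) (fun k => (encR_rgt (fun k => u (rgt k)) k).symm)
  have h2 := form_eq_zero (N := 3) (by norm_num) (inCode_enc 3 (Pi.single i 1)) h
  rw [form_enc_single] at h2
  simp only [eps_cast, one_mul] at h2
  rw [encR_lft]
  exact eq_neg_of_add_eq_zero_left h2

lemma wt_eq_add (u : Fin 24 → ZMod 3) :
    wt u = wtn (fun i => u (lft i)) + wtn (fun k => u (rgt k)) := by
  rw [wt, sum24]; rfl

lemma rowR_lt (k : Fin 12) (j : Fin 24) : rowR k j < 3 := by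
  unfold rowR
  split_ifs
  · exact Nat.mod_lt _ (by norm_num)
  · norm_num
  · norm_num

/-- A word of weight at most nine has at most four nonzero coordinates in one of its halves, so that
the two searches find it. -/
lemma wt_trichotomy {u : Fin 24 → ZMod 3} (hu : InCode 3 u) :
    wt u = 0 ∨ 10 ≤ wt u ∨ wt u = 9 ∧ Orb rep u := by
  by_cases h1 : wtn (fun i => u (lft i)) ≤ 4
  · have := (walk_spec rowL (fun _ _ => Nat.mod_lt _ (by norm_num)) rowsL_eq
      (by norm_num) walk_left).1 _ h1
    rw [sum_rowL, ← hu.eq_enc] at this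
    exact this
  · by_cases h2 : wtn (fun k => u (rgt k)) ≤ 4
    · have := (walk_spec rowR rowR_lt rowsR_eq (by norm_num) walk_right).1 _ h2
      have e := hu.eq_encR
      unfold encR at e
      rw [← e] at this
      exact this
    · right; left
      rw [wt_eq_add]
      omega

/-- The words of weight nine form a single orbit under the automorphisms. -/
lemma orb_of_wt {u : Fin 24 → ZMod 3} (hu : InCode 3 u) (h : wt u = 9) : Orb rep u := by
  rcases wt_trichotomy hu with h1 | h1 | h1
  · omega
  · omega
  · exact h1.2

lemma nine_le_wt {u : Fin 24 → ZMod 3} (hu : InCode 3 u) (h : wt u ≠ 0) : 9 ≤ wt u := by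
  rcases wt_trichotomy hu with h1 | h1 | h1 <;> omega

/-- Exactly one half of a word of weight nine has at most four nonzero coordinates, so that the two
searches count each word once. -/
lemma card_wt_nine : (Cd3.filter fun u => wt u = 9).card = 4048 := by
  have hL : ∑ u ∈ Cd3, (if wtn (fun i => u (lft i)) ≤ 4 then (if wt u = 9 then 1 else 0) else 0)
      = 2024 := by
    have h := (walk_spec rowL (fun _ _ => Nat.mod_lt _ (by norm_num)) rowsL_eq
      (by norm_num) walk_left).2
    simp only [sum_rowL] at h
    rw [← h]
    refine Finset.sum_nbij' (fun u i => u (lft i)) (enc 3) (fun _ _ => Finset.mem_univ _)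
      (fun r _ => mem_Cd3.2 (inCode_enc 3 r)) (fun u hu => (mem_Cd3.1 hu).eq_enc.symm)
      (fun r _ => funext fun i => enc_lft 3 r i) (fun u hu => ?_)
    rw [← (mem_Cd3.1 hu).eq_enc]
  have hR : ∑ u ∈ Cd3, (if wtn (fun k => u (rgt k)) ≤ 4 then (if wt u = 9 then 1 else 0) else 0)
      = 2024 := by
    have h := (walk_spec rowR rowR_lt rowsR_eq (by norm_num) walk_right).2
    change (∑ r, if wtn r ≤ 4 then (if wt (encR r) = 9 then 1 else 0) else 0) = _ at h
    rw [← h]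
    refine Finset.sum_nbij' (fun u k => u (rgt k)) encR (fun _ _ => Finset.mem_univ _)
      (fun r _ => mem_Cd3.2 (inCode_encR r)) (fun u hu => (mem_Cd3.1 hu).eq_encR.symm)
      (fun r _ => funext fun i => encR_rgt r i) (fun u hu => ?_)
    rw [← (mem_Cd3.1 hu).eq_encR]
  have := congrArg₂ (· + ·) hL hR
  simp only [← Finset.sum_add_distrib] at this
  rw [Finset.card_filter]
  refine (Finset.sum_congr rfl fun u _ => ?_).trans this
  have h := wt_eq_add u
  split_ifs <;> omega

/-! ### The contribution of a word of weight nine -/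

/-- The sum of `F (acc + ∑ q_i * row_i)` over all vectors `q` with entries in `{0, …, 8}`. -/
def walk9 (F : ℕ → ℕ) (rows : List ℕ) (acc : ℕ) : ℕ :=
  List.rec F (fun r _ ih acc =>
    Nat.rec 0 (fun a s => Nat.add s (ih (Nat.add acc (Nat.mul a r)))) 9) rows acc

/-- The contribution of the entry `d` at coordinate `j` to the index of a word: the index is
`96 n₀ + 3 n₁ + t`, where `n₀` and `n₁` count the coordinates of valuation `0` and `1` and `t`
is the exponent of the phase at coordinate `23`. It exceeds `6143` if the entry at coordinate `23`
is not divisible by `9`. -/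
def score (j d : ℕ) : ℕ :=
  cond (Nat.beq j 23) (cond (Nat.beq (Nat.mod d 9) 0) (Nat.mod (Nat.mul 2 (Nat.div d 9)) 3) 6144)
    (cond (Nat.beq (Nat.mod d 3) 0) (cond (Nat.beq (Nat.mod d 9) 0) 0 3) 96)

/-- Indices outside the relevant range are replaced by `0`. -/
def nrm (t : ℕ) : ℕ := cond (Nat.ble 96 t) (cond (Nat.ble t 6143) t 0) 0

/-- The index of a packed word, as an exponent in base `65537`. -/
def leaf9 (P : ℕ) : ℕ :=
  force (fun t => Nat.pow 65537 (nrm t)) (digSum 1024 (fun i d => score (sig i) d) 24 0 P)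

/-- The packed generator rows number `1, 2, 4, 6`. -/
def rowsF : List ℕ :=
  [41410483017258623977129734516113866585349105624910758580755081414587392,
   5176336088175255638462167785087362283692312821197162239696119026158592,
   15528950671842721535680922973549076322774369114453589753695265680799744,
   18100581516056909199565239770108001845586111332827883304109759488]

/-- The distribution of the index after `nrm`, as pairs of a value and its multiplicity. -/
def hist : List (ℕ × ℕ) :=
  [(0, 4455), (870, 36), (871, 54), (872, 54), (873, 96), (874, 78), (875, 78),
   (876, 90), (877, 90), (878, 90), (879, 144), (880, 126), (881, 126), (882, 12),
   (883, 30), (884, 30), (1153, 18), (1154, 18), (1155, 108), (1156, 54), (1157, 54),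
   (1158, 108), (1159, 162), (1160, 162), (1161, 108), (1162, 90), (1163, 90)]

lemma walk_hist : walk9 leaf9 rowsF 0
    = (hist.map fun p : ℕ × ℕ => p.2 * 65537 ^ p.1).sum := by
  decide +kernel

lemma walk9_eq (F : ℕ → ℕ) {n : ℕ} (row : Fin n → ℕ) (acc : ℕ) :
    walk9 F (List.ofFn row) acc = ∑ q : Fin n → Fin 9, F (acc + ∑ i, (q i : ℕ) * row i) := by
  induction n generalizing acc with
  | zero => simp [walk9]
  | succ n ih =>
    have hr : ∀ (g : ℕ → ℕ) (m : ℕ),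
        (Nat.rec 0 (fun a s => Nat.add s (g a)) m : ℕ) = ∑ a ∈ Finset.range m, g a := by
      intro g m
      induction m with
      | zero => rfl
      | succ m ihm => rw [Finset.sum_range_succ, ← ihm]; rfl
    have e : walk9 F (List.ofFn row) acc = ∑ a ∈ Finset.range 9,
        walk9 F (List.ofFn fun i => row (Fin.succ i)) (acc + a * row 0) := by
      rw [← hr, List.ofFn_succ]; rfl
    rw [e, ← (Fin.consEquiv fun _ : Fin (n + 1) => Fin 9).sum_comp, Fintype.sum_prod_type,
      Finset.sum_range]
    refine Finset.sum_congr rfl fun a _ => ?_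
    rw [ih]
    refine Finset.sum_congr rfl fun q _ => ?_
    simp [Fin.consEquiv, Fin.sum_univ_succ, add_assoc]

/-- The coordinates of the first half outside the support of the representative. -/
def free : Fin 4 → Fin 12 := ![1, 2, 4, 6]

/-- The integral combinations of the generator rows outside the support of the representative. -/
def wrd (q : Fin 4 → Fin 9) (j : Fin 24) : ℕ := ∑ l, (q l : ℕ) * gen (free l) j

lemma rowsF_eq : rowsF = List.ofFn fun l => pack 1024 (fun i => gen (free l) (sigF i)) := by
  decide +kernel

lemma gen_lt : ∀ i j, gen i j < 27 := by decide +kernel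

/-- The index of a word, see `score`. -/
def index (q : Fin 4 → Fin 9) : ℕ := ∑ j : Fin 24, score j (wrd q j)

lemma wrd_lt (q : Fin 4 → Fin 9) (j : Fin 24) : wrd q j < 1024 := by
  calc wrd q j ≤ ∑ _l : Fin 4, 8 * 26 := Finset.sum_le_sum fun l _ =>
        Nat.mul_le_mul (Nat.lt_succ_iff.1 (q l).2) (Nat.lt_succ_iff.1 (gen_lt _ _))
    _ < 1024 := by simp

lemma sum_index : ∑ q : Fin 4 → Fin 9, 65537 ^ nrm (index q)
    = (hist.map fun p : ℕ × ℕ => p.2 * 65537 ^ p.1).sum := by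
  rw [← walk_hist, rowsF_eq, walk9_eq]
  refine Finset.sum_congr rfl fun q _ => ?_
  have e : 0 + ∑ l, (q l : ℕ) * pack 1024 (fun i => gen (free l) (sigF i))
      = pack 1024 (fun i => wrd q (sigF i)) := by
    simp only [pack_mul, pack_sum, zero_add]; rfl
  rw [e, leaf9, force_eq, digSum_pack _ _ fun j => wrd_lt q _]
  rw [index, ← sum_sig (fun j : Fin 24 => score j (wrd q j))]
  simp only [zero_add]
  rfl

/-- The monomial attached to an index, if it has degree `i` in `x₀`. -/
def mono9 (i t : ℕ) : MvPolynomial (Fin 4) ℂ :=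
  if t / 96 = i then C (chi (9 * ((t % 3 : ℕ) : ZMod 27))) * X 0 ^ i * X 1 ^ (t / 3 % 32) * X 2 ^ 9
    * X 3 ^ (15 - (i + t / 3 % 32)) else 0

lemma sum_mono9 (i : ℕ) :
    ∑ q : Fin 4 → Fin 9, mono9 i (nrm (index q)) = (hist.map fun p => p.2 • mono9 i p.1).sum :=
  histogram Finset.univ (fun q => nrm (index q)) hist (B := 65537) (by simp)
    (by decide +kernel) sum_index (mono9 i)

lemma mono9_of {i a b t : ℕ} (hb : b < 32) (ht : t < 3) (h : a = i) :
    mono9 i (96 * a + 3 * b + t)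
      = C (chi (9 * ((t : ℕ) : ZMod 27))) * X 0 ^ i * X 1 ^ b * X 2 ^ 9 * X 3 ^ (15 - (i + b)) := by
  have h1 : (96 * a + 3 * b + t) / 96 = i := by omega
  have h2 : (96 * a + 3 * b + t) % 3 = t := by omega
  have h3 : (96 * a + 3 * b + t) / 3 % 32 = b := by omega
  rw [mono9, if_pos h1, h2, h3]

lemma mono9_ne {i a b t : ℕ} (hb : b < 32) (ht : t < 3) (h : a ≠ i) :
    mono9 i (96 * a + 3 * b + t) = 0 := by
  rw [mono9, if_neg (by omega)]

lemma chi_nine_mod (m : ℕ) : (9 : ZMod 27) * ((m % 3 : ℕ) : ZMod 27) = 9 * (m : ZMod 27) := by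
  have h : ((9 * (m % 3) : ℕ) : ZMod 27) = ((9 * m : ℕ) : ZMod 27) := by
    rw [ZMod.natCast_eq_natCast_iff']; omega
  exact_mod_cast h

lemma three_natCast (d : ℕ) : 3 * (d : ZMod 27) = 0 ↔ d % 9 = 0 := by
  have : ((3 * d : ℕ) : ZMod 27) = 0 ↔ d % 9 = 0 := by
    rw [ZMod.natCast_eq_zero_iff]; omega
  exact_mod_cast this

lemma nine_natCast (d : ℕ) : 9 * (d : ZMod 27) = 0 ↔ d % 3 = 0 := by
  have : ((9 * d : ℕ) : ZMod 27) = 0 ↔ d % 3 = 0 := by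
    rw [ZMod.natCast_eq_zero_iff]; omega
  exact_mod_cast this

/-- The number of `j` outside the support of the representative with `w j` not divisible by `3`. -/
def cnt0 (w : Fin 24 → ℕ) : ℕ := ∑ j, if rep j = 0 ∧ w j % 3 ≠ 0 then 1 else 0

/-- The number of `j` outside the support of the representative with `w j` of valuation `1`. -/
def cnt1 (w : Fin 24 → ℕ) : ℕ := ∑ j, if rep j = 0 ∧ w j % 3 = 0 ∧ w j % 9 ≠ 0 then 1 else 0

/-- The number of `j` outside the support of the representative with `w j` divisible by `9`. -/
def cntz (w : Fin 24 → ℕ) : ℕ := ∑ j, if rep j = 0 ∧ w j % 9 = 0 then 1 else 0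

lemma cnt_add (w : Fin 24 → ℕ) : cnt0 w + cnt1 w + cntz w = 15 := by
  have : ∑ j : Fin 24, (if rep j = 0 then 1 else 0) = 15 := by decide +kernel
  rw [cnt0, cnt1, cntz, ← this, ← Finset.sum_add_distrib, ← Finset.sum_add_distrib]
  refine Finset.sum_congr rfl fun j _ => ?_
  by_cases hr : rep j = 0
  · simp only [hr, true_and]
    split_ifs <;> omega
  · simp [hr]

lemma prod_kk_rep (w : Fin 24 → ℕ) (h0 : ∀ j, rep j ≠ 0 → j ≠ 23 → w j = 0)
    (h9 : w 23 % 9 = 0) :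
    ∏ j, kk (w j : ZMod 27) (rep j) = C (chi (9 * ((2 * (w 23 / 9) % 3 : ℕ) : ZMod 27)))
      * X 0 ^ cnt0 w * X 1 ^ cnt1 w * X 2 ^ 9 * X 3 ^ cntz w := by
  have hr23 : rep 23 = 2 := by decide
  have key : ∀ j, kk (w j : ZMod 27) (rep j) =
      (if j = 23 then C (chi (9 * ((2 * (w 23 / 9) % 3 : ℕ) : ZMod 27))) else 1)
      * X 0 ^ (if rep j = 0 ∧ w j % 3 ≠ 0 then 1 else 0)
      * X 1 ^ (if rep j = 0 ∧ w j % 3 = 0 ∧ w j % 9 ≠ 0 then 1 else 0)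
      * X 2 ^ (if rep j = 0 then 0 else 1)
      * X 3 ^ (if rep j = 0 ∧ w j % 9 = 0 then 1 else 0) := by
    intro j
    by_cases hj : j = 23
    · subst hj
      have t2 : (2 : ZMod 3) ≠ 0 := by decide
      have hv : ((2 : ZMod 3).val : ZMod 27) = 2 := by decide
      simp only [kk, hr23, t2, if_false, false_and, if_true, pow_zero, mul_one, pow_one,
        three_natCast, h9, hv]
      rw [chi_nine_mod]
      congr 3
      have : w 23 = 9 * (w 23 / 9) := by omega
      conv_lhs => rw [this]
      push_cast
      ring
    · by_cases hr : rep j = 0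
      · simp only [kk, base, hr, hj, if_true, if_false, true_and, three_natCast, nine_natCast,
          pow_zero, one_mul, mul_one]
        by_cases h3 : w j % 3 = 0
        · by_cases hw9 : w j % 9 = 0
          · simp [h3, hw9]
          · simp [h3, hw9]
        · have hw9 : w j % 9 ≠ 0 := by omega
          simp [h3, hw9]
      · have := h0 j hr hj
        simp [kk, hr, hj, this, AddChar.map_zero_eq_one]
  have h2 : ∑ j : Fin 24, (if rep j = 0 then 0 else 1) = 9 := by decide +kernel
  rw [Finset.prod_congr rfl fun j _ => key j]
  simp only [Finset.prod_mul_distrib, Finset.prod_pow_eq_pow_sum, Finset.prod_ite_eq',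
    Finset.mem_univ, if_true, h2]
  rfl

lemma n0_rep (w : Fin 24 → ℕ) (h0 : ∀ j, rep j ≠ 0 → j ≠ 23 → w j = 0) (h9 : w 23 % 9 = 0) :
    n0 (fun j => (w j : ZMod 27)) = cnt0 w := by
  rw [n0, cnt0]
  refine Finset.sum_congr rfl fun j _ => ?_
  simp only [nine_natCast]
  by_cases hr : rep j = 0
  · simp only [hr, true_and]
    split_ifs <;> omega
  · have : w j % 3 = 0 := by
      by_cases hj : j = 23
      · subst hj; omega
      · rw [h0 j hr hj]
    simp [hr, this]

lemma score_ne {j d : ℕ} (hj : j ≠ 23) :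
    score j d = if d % 3 = 0 then (if d % 9 = 0 then 0 else 3) else 96 := by
  have e : ∀ a b : ℕ, a ≠ b → Nat.beq a b = false := fun a b h => by
    rw [← Bool.not_eq_true]; exact fun h' => h (Nat.eq_of_beq_eq_true h')
  have e' : ∀ a b : ℕ, a = b → Nat.beq a b = true := fun a b h => by rw [h]; exact Nat.beq_refl b
  unfold score
  rw [e j 23 hj, cond_false]
  by_cases h3 : d % 3 = 0
  · by_cases h9 : d % 9 = 0
    · rw [if_pos h3, if_pos h9, e' (Nat.mod d 3) 0 h3, e' (Nat.mod d 9) 0 h9]; rfl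
    · rw [if_pos h3, if_neg h9, e' (Nat.mod d 3) 0 h3, e (Nat.mod d 9) 0 h9]; rfl
  · rw [if_neg h3, e (Nat.mod d 3) 0 h3]; rfl

lemma score_last (d : ℕ) : score 23 d = if d % 9 = 0 then 2 * (d / 9) % 3 else 6144 := by
  have e : ∀ a b : ℕ, a ≠ b → Nat.beq a b = false := fun a b h => by
    rw [← Bool.not_eq_true]; exact fun h' => h (Nat.eq_of_beq_eq_true h')
  by_cases h9 : d % 9 = 0
  · have h9' : Nat.mod d 9 = 0 := h9
    rw [if_pos h9, score, h9']; rfl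
  · rw [if_neg h9, score, e (Nat.mod d 9) 0 h9]; rfl

lemma sum_score (w : Fin 24 → ℕ) (h0 : ∀ j, rep j ≠ 0 → j ≠ 23 → w j = 0) (h9 : w 23 % 9 = 0) :
    ∑ j : Fin 24, score j (w j) = 96 * cnt0 w + 3 * cnt1 w + 2 * (w 23 / 9) % 3 := by
  have : (2 * (w 23 / 9) % 3) = ∑ j : Fin 24, if j = 23 then 2 * (w 23 / 9) % 3 else 0 := by simp
  rw [this, cnt0, cnt1, Finset.mul_sum, Finset.mul_sum, ← Finset.sum_add_distrib,
    ← Finset.sum_add_distrib]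
  refine Finset.sum_congr rfl fun j _ => ?_
  by_cases hj : j = 23
  · subst hj
    have hr23 : rep 23 ≠ 0 := by decide
    have := score_last (w 23)
    rw [if_pos h9] at this
    simp only [hr23, false_and, if_false, if_true]
    simpa using this
  · have hj' : (j : ℕ) ≠ 23 := fun h => hj (Fin.ext h)
    rw [score_ne hj']
    by_cases hr : rep j = 0
    · simp only [hr, true_and, hj, if_false]
      split_ifs <;> omega
    · simp [hr, hj, h0 j hr hj]

lemma nrm_of_ge {t : ℕ} (h : 6144 ≤ t) : nrm t = 0 := by
  have h1 : Nat.ble t 6143 = false := by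
    rw [← Bool.not_eq_true]; exact fun h' => by have := Nat.le_of_ble_eq_true h'; omega
  unfold nrm
  rw [h1]
  cases Nat.ble 96 t <;> rfl

lemma nrm_of_lt {t : ℕ} (h : t < 96) : nrm t = 0 := by
  have h1 : Nat.ble 96 t = false := by
    rw [← Bool.not_eq_true]; exact fun h' => by have := Nat.le_of_ble_eq_true h'; omega
  unfold nrm
  rw [h1]
  rfl

lemma nrm_of_mem {t : ℕ} (h : 96 ≤ t) (h' : t < 6144) : nrm t = t := by
  have h1 : Nat.ble 96 t = true := Nat.ble_eq_true_of_le h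
  have h2 : Nat.ble t 6143 = true := Nat.ble_eq_true_of_le (by omega)
  unfold nrm
  rw [h1, h2]
  rfl

lemma mono9_eq {i : ℕ} (hi : 1 ≤ i) (w : Fin 24 → ℕ)
    (h0 : ∀ j, rep j ≠ 0 → j ≠ 23 → w j = 0) :
    (if n0 (fun j => (w j : ZMod 27)) = i then ∏ j, kk (w j : ZMod 27) (rep j) else 0)
      = mono9 i (nrm (∑ j : Fin 24, score j (w j))) := by
  have hz : mono9 i 0 = 0 := by rw [mono9, if_neg (by omega)]
  by_cases h9 : w 23 % 9 = 0
  · have hc := cnt_add w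
    rw [n0_rep w h0 h9, prod_kk_rep w h0 h9, sum_score w h0 h9]
    have ht : 2 * (w 23 / 9) % 3 < 3 := Nat.mod_lt _ (by norm_num)
    generalize 2 * (w 23 / 9) % 3 = t at ht ⊢
    by_cases ha : cnt0 w = i
    · have hcz : cntz w = 15 - (i + cnt1 w) := by omega
      rw [nrm_of_mem (by omega) (by omega), mono9_of (by omega) ht ha, if_pos ha, ha, hcz]
    · rw [if_neg ha]
      by_cases ha0 : cnt0 w = 0
      · rw [nrm_of_lt (by omega), hz]
      · rw [nrm_of_mem (by omega) (by omega), mono9_ne (by omega) ht ha]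
  · have hk : kk (w 23 : ZMod 27) (rep 23) = 0 := by
      have hr23 : rep 23 ≠ 0 := by decide
      rw [kk, if_neg hr23, if_neg (by rwa [three_natCast])]
    have hp : ∏ j, kk (w j : ZMod 27) (rep j) = 0 :=
      Finset.prod_eq_zero (Finset.mem_univ 23) hk
    have hs : 6144 ≤ ∑ j : Fin 24, score j (w j) := by
      have h1 := Finset.single_le_sum (f := fun j : Fin 24 => score j (w j))
        (fun _ _ => Nat.zero_le _) (Finset.mem_univ 23)
      have h2 := score_last (w 23)
      rw [if_neg h9] at h2
      exact h2.symm.le.trans h1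
    rw [hp, ite_self, nrm_of_ge hs, hz]

/-! ### The components of degree nine in `x₀` or in `y` -/

lemma enc_add_nine (r t : Fin 12 → ZMod 27) :
    enc 27 (fun i => r i + 9 * t i) = enc 27 r + 9 • enc 27 t := by
  have h := ((inCode_translate (c := enc 27 r) (inCode_enc 27 t)).2 (inCode_enc 27 r)).eq_enc
  rw [h]
  congr 1
  funext i
  simp

lemma n0_translate (c v : Fin 24 → ZMod 27) : n0 (c + 9 • v) = n0 c := by
  rw [n0, n0]
  refine Finset.sum_congr rfl fun j _ => ?_
  have h2 : 9 * ((c + 9 • v) j) = 9 * c j := by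
    have : (27 : ZMod 27) = 0 := by decide
    have e : (c + 9 • v) j = c j + 9 * v j := by simp
    rw [e]
    linear_combination (3 * v j) * this
  rw [h2]

lemma fin_prod_cast : ∀ p : Fin 3 × Fin 9, (id (finProdFinEquiv p) : ZMod 27)
    = ((p.2 : ℕ) : ZMod 27) + 9 * ((p.1 : ℕ) : ZMod 27) := by decide

/-- A function on `(ℤ/27ℤ)^12` which is invariant under translation by multiples of `9` is summed
over representatives. -/
lemma sum_mod_nine {M : Type*} [AddCommMonoid M] (H : (Fin 12 → ZMod 27) → M)
    (hH : ∀ r t : Fin 12 → ZMod 27, H (fun i => r i + 9 * t i) = H r) :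
    ∑ r, H r = 3 ^ 12 • ∑ s : Fin 12 → Fin 9, H (fun i => ((s i : ℕ) : ZMod 27)) := by
  let E : (Fin 12 → Fin 3 × Fin 9) ≃ (Fin 12 → ZMod 27) :=
    Equiv.arrowCongr (Equiv.refl _) finProdFinEquiv
  have h1 : ∀ p, H (E p) = H (fun i => (((p i).2 : ℕ) : ZMod 27)) := by
    intro p
    refine Eq.trans ?_ (hH _ (fun i => (((p i).1 : ℕ) : ZMod 27)))
    congr 1
    funext i
    exact fin_prod_cast (p i)
  rw [← E.sum_comp]
  simp only [h1]
  rw [← (Equiv.arrowProdEquivProdArrow (Fin 12) (fun _ => Fin 3) (fun _ => Fin 9)).symm.sum_comp,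
    Fintype.sum_prod_type]
  simp only [Equiv.arrowProdEquivProdArrow_symm_apply, Finset.sum_const, Finset.card_univ,
    Fintype.card_pi, Fintype.card_fin, Finset.prod_const]

/-- Extension by zero of a vector on the free coordinates. -/
def ext9 (q : Fin 4 → Fin 9) : Fin 12 → Fin 9 :=
  ![0, q 0, q 1, 0, q 2, 0, q 3, 0, 0, 0, 0, 0]

lemma enc_ext9 (q : Fin 4 → Fin 9) :
    enc 27 (fun i => ((ext9 q i : ℕ) : ZMod 27)) = fun j => ((wrd q j : ℕ) : ZMod 27) := by
  funext j
  rw [enc_eq_gen, wrd]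
  simp [Fin.sum_univ_succ, ext9, free]

lemma gen_free : ∀ j, rep j ≠ 0 → j ≠ 23 → ∀ l, gen (free l) j = 0 := by decide +kernel

lemma rep_lft : ∀ i : Fin 12, rep (lft i) = 0 ↔ i = 1 ∨ i = 2 ∨ i = 4 ∨ i = 6 := by
  decide +kernel

lemma sum_ext9 {M : Type*} [AddCommMonoid M] (G : (Fin 12 → Fin 9) → M)
    (hG : ∀ s, (∃ i, rep (lft i) ≠ 0 ∧ s i ≠ 0) → G s = 0) :
    ∑ s, G s = ∑ q, G (ext9 q) := by
  rw [← Finset.sum_filter_of_ne (p := fun s => ∀ i, rep (lft i) ≠ 0 → s i = 0)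
    (fun s _ hs i hi => by_contra fun h => hs (hG s ⟨i, hi, h⟩))]
  refine Finset.sum_nbij' (fun s l => s (free l)) ext9 (fun _ _ => Finset.mem_univ _) ?_ ?_ ?_ ?_
  · intro q _
    rw [Finset.mem_filter]
    refine ⟨Finset.mem_univ _, fun i hi => ?_⟩
    rw [Ne, rep_lft] at hi
    fin_cases i <;> first | rfl | exact absurd (by decide) hi
  · intro s hs
    have h := (Finset.mem_filter.1 hs).2
    funext i
    by_cases hi : rep (lft i) = 0
    · rcases (rep_lft i).1 hi with rfl | rfl | rfl | rfl <;> rfl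
    · rw [h i hi]
      rw [rep_lft] at hi
      fin_cases i <;> first | rfl | exact absurd (by decide) hi
  · intro q _
    funext l
    fin_cases l <;> rfl
  · intro s hs
    have h := (Finset.mem_filter.1 hs).2
    congr 1
    funext i
    by_cases hi : rep (lft i) = 0
    · rcases (rep_lft i).1 hi with rfl | rfl | rfl | rfl <;> rfl
    · rw [h i hi]
      rw [rep_lft] at hi
      fin_cases i <;> first | rfl | exact absurd (by decide) hi

lemma gen_inCode3_rep : InCode 3 rep := by
  unfold InCode; decide +kernel

lemma wt_rep : wt rep = 9 := by
  rw [wt]; decide +kernel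

lemma comp_rep_eq {i : ℕ} (hi : 1 ≤ i) :
    comp i 9 (VV rep) = 3 ^ 12 * (hist.map fun p => p.2 • mono9 i p.1).sum := by
  rw [comp_VV, if_pos wt_rep, ← sum_mono9, Finset.sum_filter]
  have e1 : ∑ c ∈ Cd, (if n0 c = i then ∏ l, kk (c l) (rep l) else 0)
      = ∑ r : Fin 12 → ZMod 27,
        (if n0 (enc 27 r) = i then ∏ l, kk (enc 27 r l) (rep l) else 0) := by
    refine Finset.sum_nbij' (fun c k => c (lft k)) (enc 27) (fun _ _ => Finset.mem_univ _)
      (fun r _ => mem_Cd.2 (inCode_enc 27 r)) (fun c hc => (mem_Cd.1 hc).eq_enc.symm)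
      (fun r _ => funext fun k => enc_lft 27 r k) (fun c hc => ?_)
    rw [← (mem_Cd.1 hc).eq_enc]
  rw [e1, sum_mod_nine, sum_ext9, nsmul_eq_mul]
  · rw [Nat.cast_pow, Nat.cast_ofNat]
    refine congrArg _ (Finset.sum_congr rfl fun q _ => ?_)
    rw [enc_ext9, mono9_eq hi, index]
    intro j hj hj'
    exact Finset.sum_eq_zero fun l _ => by rw [gen_free j hj hj' l, mul_zero]
  · rintro s ⟨k, hk, hs⟩
    have hz : kk (enc 27 (fun i => ((s i : ℕ) : ZMod 27)) (lft k)) (rep (lft k)) = 0 := by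
      rw [enc_lft, kk, if_neg hk, if_neg]
      rw [three_natCast]
      have := (s k).2
      have h0 : (s k : ℕ) ≠ 0 := fun h => hs (Fin.ext h)
      omega
    rw [Finset.prod_eq_zero (Finset.mem_univ (lft k)) hz, ite_self]
  · intro r t
    rw [enc_add_nine, n0_translate, prod_kk_translate, pair_eq_zero gen_inCode3_rep (inCode_enc 27 t),
      AddChar.map_zero_eq_one, C_1, one_mul]

lemma C_chi_zero : (C (chi 0) : MvPolynomial (Fin 4) ℂ) = 1 := by
  rw [AddChar.map_zero_eq_one, C_1]

lemma C_chi_18 : (C (chi 18) : MvPolynomial (Fin 4) ℂ) = -1 - C (chi 9) := by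
  rw [show chi 18 = -1 - chi 9 by linear_combination chi_omega]
  simp

lemma comp_rep_9 : comp 9 9 (VV rep) = 3 ^ 12 * (18 * X 0 ^ 9 * X 2 ^ 9
    * (-(X 1 ^ 2 * X 3 ^ 4) + X 1 ^ 3 * X 3 ^ 3 + X 1 ^ 5 * X 3 - X 1 ^ 6)) := by
  rw [comp_rep_eq (by norm_num)]
  congr 1
  simp only [hist, List.map_cons, List.map_nil, List.sum_cons, List.sum_nil, mono9]
  norm_num only [if_true, if_false]
  simp only [nsmul_eq_mul, C_chi_zero, C_chi_18]
  push_cast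
  ring

lemma comp_rep_12 : comp 12 9 (VV rep) = 3 ^ 12 * (18 * X 0 ^ 9 * X 2 ^ 9
    * (-(X 0 ^ 3 * X 3 ^ 3) + 3 * X 0 ^ 3 * X 1 * X 3 ^ 2
      - 3 * X 0 ^ 3 * X 1 ^ 2 * X 3 + X 0 ^ 3 * X 1 ^ 3)) := by
  rw [comp_rep_eq (by norm_num)]
  congr 1
  simp only [hist, List.map_cons, List.map_nil, List.sum_cons, List.sum_nil, mono9]
  norm_num only [if_true, if_false]
  simp only [nsmul_eq_mul, C_chi_zero, C_chi_18]
  push_cast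
  ring

lemma comp_rep_15 : comp 15 9 (VV rep) = 0 := by
  rw [comp_rep_eq (by norm_num)]
  simp [hist, mono9]

lemma comp_nine (i : ℕ) : comp i 9 WW = 4048 * comp i 9 (VV rep) := by
  rw [comp_WW, Finset.sum_congr rfl (g := fun _ => comp i 9 (VV rep)), Finset.sum_const,
    card_wt_nine, nsmul_eq_mul, Nat.cast_ofNat]
  intro u hu
  rw [Finset.mem_filter, mem_Cd3] at hu
  rw [(orb_of_wt hu.1 hu.2).VV_eq]

lemma comp_9_9 : comp 9 9 WW = 3 ^ 12 * (72864 * X 0 ^ 9 * X 2 ^ 9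
    * (-(X 1 ^ 2 * X 3 ^ 4) + X 1 ^ 3 * X 3 ^ 3 + X 1 ^ 5 * X 3 - X 1 ^ 6)) := by
  rw [comp_nine, comp_rep_9]; ring

lemma comp_12_9 : comp 12 9 WW = 3 ^ 12 * (72864 * X 0 ^ 9 * X 2 ^ 9
    * (-(X 0 ^ 3 * X 3 ^ 3) + 3 * X 0 ^ 3 * X 1 * X 3 ^ 2
      - 3 * X 0 ^ 3 * X 1 ^ 2 * X 3 + X 0 ^ 3 * X 1 ^ 3)) := by
  rw [comp_nine, comp_rep_12]; ring

lemma comp_15_9 : comp 15 9 WW = 0 := by rw [comp_nine, comp_rep_15, mul_zero]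

lemma comp_9_12 : comp 9 12 WW = 3 ^ 12 * (72864 * X 0 ^ 9 * X 2 ^ 9 * (-(X 1 ^ 3 * X 2 ^ 3))) := by
  have h := mac_comp_WW 12 9
  rw [comp_12_9] at h
  simp only [map_mul, map_add, map_sub, map_neg, map_pow, map_ofNat, mac_X] at h
  simp only [Matrix.cons_val] at h
  have h3 : (3 ^ 12 : MvPolynomial (Fin 4) ℂ) ≠ 0 := pow_ne_zero _ (by norm_num)
  apply mul_left_cancel₀ h3
  rw [← h]
  ring

lemma comp_9_15 : comp 9 15 WW = 0 := by
  have h := mac_comp_WW 15 9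
  rw [comp_15_9, map_zero] at h
  have h3 : (3 ^ 12 : MvPolynomial (Fin 4) ℂ) ≠ 0 := pow_ne_zero _ (by norm_num)
  exact (mul_eq_zero.1 h.symm).resolve_left h3

/-! ### Pairs of complementary words of weight twelve -/

/-- The sum of `F (acc + ∑ r_i * row_i)` over all vectors `r` with entries in `{1, 2}`. -/
def walk12 (F : ℕ → ℕ) (rows : List ℕ) (acc : ℕ) : ℕ :=
  List.rec F (fun r _ ih acc => Nat.add (ih (Nat.add acc r)) (ih (Nat.add acc (Nat.mul 2 r))))
    rows acc

/-- The packed generator rows, in base `2 ^ 20` with reversed coordinates. -/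
def rowsG : List ℕ :=
  [2977131414714805823690030317109266572712515013375254774912983855843898567922410511343386756899801555031543364267037375884731493204504870937,
   2839213766779714416208296124562517712318911565184836172974571090571277183894719949119142860605810397662614962675828004623195791425560,
   2707685248164858261307045101702230179137145581421695874189926520440393985280896997347994179592022557511242543651311762362335235,
   2582249878086908589655919172003011874329705792829223539790606023702014891315928234380425450652065051976812144450808578056,
   2462625387274654950767440006258975862817483704427680386149914785156146738522669405354107663150168028248353274855433,
   2348542582773833227889480596789337027375704453897125697617297799488973735018275225542741848004462636830818312,
   2239744742177804210557442280568444316876580079869848965958334177939468066124974310618346935753940926464,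
   2135987035920910082395021706188087119716765867944550500533567851478083132027136428145261714341910,
   2037035976334486086268465908372592412379811316434363807210847069191882538600391441662345235,
   1942668892225729094509424882220854254013636620625034218783761895167291269962282303508,
   1852673427802114124811939713862185503045233256537250811841436201495705062211610,
   1766872339747668075086623477838303183430487893729784165177372918687989762]

/-- The packed combinations of the generator rows with coefficients in `{1, 2}` and no coordinate
divisible by `3`. -/
def fullWords : List ℕ :=
  [2977134253931280291234863724381342589465320213303741888619466380206825477480293850646785579804412930162633764630383979311277894646923002022,
   2977134253931280291234863724383691132048096182518667290126339964931102044475183173125071307817743785882190543083600373897089371169218363616,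
   2977134253931280291234866187006729866360015722921552360095442223158131118660809774591987818108625296629797940897595176701145844421483299037,
   2977134253931280291234866187009078408942791692138514795635979549067752382600774327246998617761412547114844322491699933056887573799408500986,
   2977134253931280293817113602470599721704013218536680281464964888375422282142594474679651834249901122710322556360945550841986163138507047133,
   2977134253931280293817116065095986998598710864139489635932017895364775621218055496892860713066878296263267095501252940391366473984462815467,
   2977134253933987976483031045268036909221973210922885295119421638465643600644417756782506372625477416053352385223861892791627593348592697570,
   2977134253933987976483031045268036909221975346911958250063167774674461358016360371800186012293272647570123954341612065863163364384624869597,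
   2977134253933987979065278460729558226462686357665732155064370635564951726576292940616310145392457700469330151034126466988688678055697187012,
   2977134253933987979065278460729558226462688493650731041940787436727885415604212615265739156117998794038435488725558290918985074756719476957,
   2977134253933987979065278460731906766805717584702853347956470831944746198864279397370514537983252695691022594252400661958267115867645935888,
   2977134253933987979065280923357294043700410958333627894637024642751226533164448696243513085002026545290440805511873984606100257669553062129,
   2977137093145047070949279932677467154222779410382184242842169261353491916253099828575399536971682277145852574557218612036150755967376556309,
   2977137093145047070949282395305202969220757132885239850947294887602760613649306163687457841701410319993130610325236109026384263155452739832,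
   2977137093145047073531529810764375741638951704220355985704350378594331823419753723716784141256614103202388968894907110423365192321217855753,
   2977137093145047073531529810764375743878698582383159079252871675872484767965656045719266986435377830277463447250059670472248611932928475384,
   2977137093145047073531532273389763016293904607647398163647624846200585542563709896236869125754713493581355045051128551124328820268862537978,
   2977137093145047073531532273392111561116421047064018897915439582686664037558947124551001010167763444697348573355591909750474309037569605847,
   2977137093147754756197444790941122739667510731609369620543932782701187867818934981815500838294611037455493203111532666667366437503621923039,
   2977137093147754756197444790941122741907253337800137912133961560475421963457567895215422737193919605635574497830866629481753870876818800863,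
   2977137093147754756197444790941122741907253337802174946167629007009389136970640417346662156682220394051007663367108458289264488061261054200,
   2977137093147754756197447253564161473979432408001327647399451922037958468339801560535751727930265748761593413971581163311628820377951535367,
   2977137093147754758779697131651070061395604701837462352342631513638461744863035124908529505592791332435710791813397941263975718114222407916,
   2977137093147754758779697131653418603978380671052387755792172137913272731913476849592869001956417460363614763905834605415699595975049871646,
   5954265668646086114924894041490609164417579968858837910066227002707203700527404702347487737456821330124286529985317332518134087965719134420,
   5954265668646086114924894041492957707000355938073763313515767626982014687577846427031827233820447458052190502077753996669857965826546598150,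
   5954265668646086117507143919579866294416528231909898018458947218582517964101079991404605011482973041726307879919570774622204863562817470699,
   5954265668646086117507146382202905026488707302109050719690770133611087295470241134593694582731018396436893630524043479644569195879507951866,
   5954265668646086117507146382202905026488707302111087753724437580145054468983313656724934002219319184852326796060285308452079813063950205203,
   5954265668646086117507146382202905028728449908301856045314466357919288564621946570124855901118627753032408090779619271266467246437147083027,
   5954265668648793800173058899751916207279539592847206767942959557933812394881934427389355729245475345790552720535560028183359374903199400219,
   5954265668648793800173058899754264752102056032263827502210774294419890889877171655703487613658525296906546248840023386809504863671906468088,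
   5954265668648793800173061362379652024517262057528066586605527464747991664475225506221089752977860960210437846641092267461585072007840530682,
   5954265668648793800173061362379652026757008935690869680154048762026144609021127828223572598156624687285512324996244827510468491619551150313,
   5954265668648793802755308777838824799175203507025985814911104253017715818791575388252898897711828470494770683565915828907449420785316266234,
   5954265668648793802755311240466560614173181229529041423016229879266984516187781723364957202441556513342048719333933325897682927973392449757,
   5954268507859852894639310249786733724695549681577597771221374497869249899276432855696843654411212245197460488379277953327733426271215943937,
   5954268507859852894639312712412121001590243055208372317901928308675730233576602154569842201429986094796878699638751275975566568073123070178,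
   5954268507859852894639312712414469541933272146260494623917611703892591016836668936674617583295239996449465805165593647014848609184049529109,
   5954268507859852894639312712414469541933274282245493510794028505055524705864588611324046594020781090018571142857025470945145005885071819054,
   5954268507859852897221560127875990859173985292999267415795231365946015074424521180140170727119966142917777339549539872070670319556144136469,
   5954268507859852897221560127875990859173987428988340370738977502154832831796463795157850366787761374434548908667290045142206090592176308496,
   5954268507862560579887475108048040769797249775771736029926381245255700811222826055047496026346360494224634198389898997542467209956306190599,
   5954268507862560579887477570673428046691947421374545384393434252245054150298287077260704905163337667777578737530206387091847520802261958933,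
   5954268507862560582469724986134949359453168947772710870222419591552724049840107224693358121651826243373056971399452004876946110141360505080,
   5954268507862560582469724986137297902035944916989673305762956917462345313780071777348368921304613493858103352993556761232687839519285707029,
   5954268507862560582469727448760336636347864457392558375732059175689374387965698378815285431595495004605710750807551564036744312771550642450,
   5954268507862560582469727448762685178930640426607483777238932760413650954960587701293571159608825860325267529260767958622555789293846004044]

/-- Detection of the packed words without coordinate divisible by `3` that are not listed. -/
def leafFull (P : ℕ) : ℕ :=
  cond (Nat.beq (digSum 1048576 (fun _ d => cond (Nat.beq (Nat.mod d 3) 0) 0 1) 24 0 P) 24)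
    (cond (memN P fullWords) 0 1) 0

/-- The contribution of the entries `p = x % 1024` and `q = x / 1024` at some coordinate: a counter
of the coordinates with `p + q` divisible by `3`, and `64` times the residue of `q² - p²`
modulo `9` at such a coordinate. -/
def pairScore (x : ℕ) : ℕ :=
  cond (Nat.beq (Nat.mod (Nat.add (Nat.mod x 1024) (Nat.div x 1024)) 3) 0)
    (Nat.add 1 (Nat.mul 64 (Nat.mod (Nat.add (Nat.mul (Nat.div x 1024) (Nat.div x 1024))
      (Nat.mul 8 (Nat.mul (Nat.mod x 1024) (Nat.mod x 1024)))) 9))) 0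

/-- The sum of `pairScore` over all coordinates. -/
def pairSum (X : ℕ) : ℕ := digSum 1048576 (fun _ x => pairScore x) 24 0 X

/-- The condition that `∑ (q² - p²)` is nonzero modulo `9` if exactly twelve coordinates
contribute. -/
def pairOk (T : ℕ) : Bool :=
  cond (Nat.beq (Nat.mod T 64) 12) (cond (Nat.beq (Nat.mod (Nat.div T 64) 9) 0) false true) true

lemma walk_full : walk12 leafFull rowsG 0 = 0 := by decide +kernel

lemma pairs_ok : (fullWords.all fun P => fullWords.all fun Q =>
    pairOk (pairSum (Nat.add P (Nat.mul 1024 Q)))) = true := by decide +kernel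

attribute [irreducible] fullWords

lemma walk12_eq_zero {F : ℕ → ℕ} {n : ℕ} (row : Fin n → ℕ) (acc : ℕ)
    (h : walk12 F (List.ofFn row) acc = 0) (r : Fin n → ℕ) (hr : ∀ i, r i = 1 ∨ r i = 2) :
    F (acc + ∑ i, r i * row i) = 0 := by
  induction n generalizing acc with
  | zero => simpa [walk12] using h
  | succ n ih =>
    rw [List.ofFn_succ] at h
    have e : walk12 F (List.ofFn fun i => row (Fin.succ i)) (acc + row 0)
        + walk12 F (List.ofFn fun i => row (Fin.succ i)) (acc + 2 * row 0) = 0 := h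
    obtain ⟨h1, h2⟩ := Nat.add_eq_zero_iff.1 e
    rw [Fin.sum_univ_succ, ← add_assoc]
    rcases hr 0 with h0 | h0
    · rw [h0, one_mul]
      exact ih _ _ h1 _ fun i => hr _
    · rw [h0]
      exact ih _ _ h2 _ fun i => hr _

lemma rowsG_eq : rowsG = List.ofFn fun i => pack 1048576 (fun j => gen i (Fin.rev j)) := by
  decide +kernel

lemma sum_rev {M : Type*} [AddCommMonoid M] (f : Fin 24 → M) : ∑ j, f (Fin.rev j) = ∑ j, f j :=
  Equiv.sum_comp Fin.revPerm f

/-- A ternary codeword without zero coordinate lifts to a listed word. -/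
lemma full_spec {p : Fin 24 → ZMod 3} (hp : InCode 3 p) (hne : ∀ j, p j ≠ 0) :
    ∃ P : Fin 24 → ℕ, (∀ j, P j < 1024) ∧ InCode 27 (fun j => (P j : ZMod 27)) ∧
      (∀ j, (P j : ZMod 3) = p j) ∧ pack 1048576 (fun j => P (Fin.rev j)) ∈ fullWords := by
  have hval : ∀ a : ZMod 3, a ≠ 0 → a.val = 1 ∨ a.val = 2 := by decide
  have hb : ∀ j, ∑ i, (p (lft i)).val * gen i j < 1024 := by
    intro j
    calc _ ≤ ∑ _i : Fin 12, 2 * 26 := Finset.sum_le_sum fun i _ =>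
          Nat.mul_le_mul (Nat.lt_succ_iff.1 (ZMod.val_lt _)) (Nat.lt_succ_iff.1 (gen_lt i j))
      _ < 1024 := by simp
  have h3 : ∀ j, ((∑ i, (p (lft i)).val * gen i j : ℕ) : ZMod 3) = p j := by
    intro j
    rw [congrFun hp.eq_enc j, enc_eq_gen]
    simp
  refine ⟨fun j => ∑ i, (p (lft i)).val * gen i j, hb, ?_, h3, ?_⟩
  · have := inCode_enc 27 (fun i => ((p (lft i)).val : ZMod 27))
    refine cast ?_ this
    congr 1
    funext j
    rw [enc_eq_gen, Nat.cast_sum]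
    exact Finset.sum_congr rfl fun i _ => (Nat.cast_mul _ _).symm
  · have hw := walk_full
    rw [rowsG_eq] at hw
    have h := walk12_eq_zero _ _ hw (fun i => (p (lft i)).val) (fun i => hval _ (hne _))
    rw [zero_add] at h
    simp only [pack_mul, pack_sum] at h
    have hd : digSum 1048576 (fun _ d => cond (Nat.beq (Nat.mod d 3) 0) 0 1) 24 0
        (pack 1048576 fun j : Fin 24 => ∑ i, (p (lft i)).val * gen i (Fin.rev j)) = 24 := by
      rw [digSum_pack _ _ (fun j => (hb _).trans (by norm_num))]
      rw [Finset.sum_congr rfl (g := fun _ => 1)]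
      · simp
      · intro j _
        have : ¬ (∑ i, (p (lft i)).val * gen i (Fin.rev j)) % 3 = 0 := by
          rw [← natCast3_eq_zero, h3]; exact hne _
        have hbq : Nat.beq (Nat.mod (∑ i, (p (lft i)).val * gen i (Fin.rev j)) 3) 0 = false := by
          rw [Bool.eq_false_iff]; intro hq; exact this (Nat.eq_of_beq_eq_true hq)
        rw [hbq]; rfl
    unfold leafFull at h
    rw [hd] at h
    apply mem_of_memN
    by_contra hm
    rw [Bool.not_eq_true] at hm
    rw [hm] at h
    exact absurd h (by decide)

lemma ee_nine (j : Fin 24) : 9 * ee j = 9 := by revert j; decide +kernel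

/-- The contribution of one coordinate to three times the orthogonality relation between `P + Q`
and `c`. -/
lemma pair_coord {P Q : ℕ} {c e : ZMod 27} {u b : ZMod 3} (he : 9 * e = 9)
    (hP : (P : ZMod 3) = u + b) (hQ : (Q : ZMod 3) = u - b) (hb : red c = b)
    (hu : u ≠ 0 → 3 * c = 0) :
    3 * (e * ((P : ZMod 27) + Q) * c)
      = ((if (P + Q) % 3 = 0 then 3 * ((Q * Q + 8 * (P * P)) % 9) else 0 : ℕ) : ZMod 27) := by
  have h2 : ((P + Q : ℕ) : ZMod 3) = - u := by
    push_cast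
    rw [hP, hQ]
    have e : ∀ a b : ZMod 3, a + b + (a - b) = -a := by decide
    exact e u b
  by_cases h : u = 0
  · rw [h, neg_zero, natCast3_eq_zero] at h2
    rw [if_pos h2]
    obtain ⟨k, hk⟩ := Nat.dvd_of_mod_eq_zero h2
    have hk' : (P : ZMod 27) + Q = 3 * k := by exact_mod_cast congrArg (Nat.cast (R := ZMod 27)) hk
    have h9 : 9 * (c - ((Q : ZMod 27) - P)) = 0 := by
      rw [nine_mul_eq_zero_iff]
      have : red (c - ((Q : ZMod 27) - P)) = red c - ((Q : ZMod 3) - P) := by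
        simp [red, map_sub]
      rw [this, hb, hP, hQ]
      have e : ∀ a b : ZMod 3, b - (a - b - (a + b)) = 0 := by decide
      exact e u b
    have hm : ((3 * ((Q * Q + 8 * (P * P)) % 9) : ℕ) : ZMod 27)
        = ((3 * (Q * Q + 8 * (P * P)) : ℕ) : ZMod 27) := by
      rw [ZMod.natCast_eq_natCast_iff']; omega
    rw [hm]
    push_cast
    have h27 : (27 : ZMod 27) = 0 := by decide
    calc 3 * (e * ((P : ZMod 27) + Q) * c) = (9 * e) * k * c := by rw [hk']; ring
      _ = k * (9 * (c - ((Q : ZMod 27) - P))) + 3 * (3 * k) * ((Q : ZMod 27) - P) := by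
        rw [he]; ring
      _ = 3 * ((P : ZMod 27) + Q) * ((Q : ZMod 27) - P) := by rw [h9, hk']; ring
      _ = 3 * ((Q : ZMod 27) * Q + 8 * (P * P)) - 27 * P * P := by ring
      _ = _ := by rw [h27]; ring
  · have h3 : ¬ (P + Q) % 3 = 0 := by
      rw [← natCast3_eq_zero, h2]; simpa using h
    rw [if_neg h3]
    calc 3 * (e * ((P : ZMod 27) + Q) * c) = e * ((P : ZMod 27) + Q) * (3 * c) := by ring
      _ = _ := by rw [hu h]; simp

lemma pairScore_eq {P Q : ℕ} (hP : P < 1024) :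
    pairScore (P + 1024 * Q) = (if (P + Q) % 3 = 0 then 1 else 0)
      + 64 * (if (P + Q) % 3 = 0 then (Q * Q + 8 * (P * P)) % 9 else 0) := by
  have h1 : Nat.mod (P + 1024 * Q) 1024 = P := by
    change (P + 1024 * Q) % 1024 = P; omega
  have h2 : Nat.div (P + 1024 * Q) 1024 = Q := by
    change (P + 1024 * Q) / 1024 = Q; omega
  unfold pairScore
  rw [h1, h2]
  by_cases h : (P + Q) % 3 = 0
  · have : Nat.beq (Nat.mod (Nat.add P Q) 3) 0 = true := by
      rw [show Nat.mod (Nat.add P Q) 3 = 0 from h]; rfl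
    rw [this, if_pos h, if_pos h]; rfl
  · have : Nat.beq (Nat.mod (Nat.add P Q) 3) 0 = false := by
      rw [Bool.eq_false_iff]; intro hq; exact h (Nat.eq_of_beq_eq_true hq)
    rw [this, if_neg h, if_neg h]; rfl

/-- There is no pair of a ternary codeword `u` and a codeword `c`, both of weight twelve modulo
`3`, with `c` divisible by `9` on the support of `u`. -/
lemma no_pair {u : Fin 24 → ZMod 3} {c : Fin 24 → ZMod 27} (hu : InCode 3 u) (hc : InCode 27 c)
    (hwu : wt u = 12) (hwc : n0 c = 12) (h : ∀ l, u l ≠ 0 → 3 * c l = 0) : False := by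
  have hbu : ∀ l, u l ≠ 0 → red (c l) = 0 := by
    intro l hl
    rw [← nine_mul_eq_zero_iff]
    calc 9 * c l = 3 * (3 * c l) := by ring
      _ = 0 := by rw [h l hl, mul_zero]
  -- Both supports have twelve elements, hence they are complementary.
  have hcompl : ∀ l, u l = 0 → red (c l) ≠ 0 := by
    have hs : ∑ j : Fin 24, ((if u j = 0 then 0 else 1) + (if red (c j) = 0 then 0 else 1))
        = ∑ j : Fin 24, 1 := by
      rw [Finset.sum_add_distrib]
      rw [n0_eq_wt, wt] at hwc
      rw [wt] at hwu
      rw [hwu, hwc]; rfl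
    have hle : ∀ j ∈ Finset.univ, (if u j = 0 then 0 else 1) + (if red (c j) = 0 then 0 else 1)
        ≤ 1 := by
      intro j _
      by_cases hj : u j = 0
      · rw [if_pos hj]; split_ifs <;> simp
      · rw [if_neg hj, if_pos (hbu j hj)]
    have := (Finset.sum_eq_sum_iff_of_le hle).1 hs
    intro l hl hl'
    have := this l (Finset.mem_univ l)
    rw [if_pos hl, if_pos hl'] at this
    exact absurd this (by decide)
  have hβ := inCode_red hc
  have key : ∀ a b : ZMod 3, (a ≠ 0 → b = 0) → (a = 0 → b ≠ 0) → a + b ≠ 0 ∧ a - b ≠ 0 := by decide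
  obtain ⟨P, hP1, hP2, hP3, hP4⟩ := full_spec (hu.add hβ)
    (fun j => (key _ _ (hbu j) (hcompl j)).1)
  obtain ⟨Q, hQ1, hQ2, hQ3, hQ4⟩ := full_spec (hu.sub hβ)
    (fun j => (key _ _ (hbu j) (hcompl j)).2)
  have hmod : ∀ j, (P j + Q j) % 3 = 0 ↔ u j = 0 := by
    intro j
    rw [← natCast3_eq_zero, Nat.cast_add, hP3, hQ3]
    simp only [Pi.add_apply, Pi.sub_apply]
    generalize u j = a
    generalize red (c j) = b
    revert a b; decide
  have hok : pairOk (pairSum (Nat.add (pack 1048576 fun j => P (Fin.rev j))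
      (Nat.mul 1024 (pack 1048576 fun j => Q (Fin.rev j))))) = true :=
    List.all_eq_true.1 (List.all_eq_true.1 pairs_ok _ hP4) _ hQ4
  have hT : pairSum (Nat.add (pack 1048576 fun j => P (Fin.rev j))
      (Nat.mul 1024 (pack 1048576 fun j => Q (Fin.rev j))))
      = (∑ j, if (P j + Q j) % 3 = 0 then 1 else 0)
      + 64 * ∑ j, (if (P j + Q j) % 3 = 0 then (Q j * Q j + 8 * (P j * P j)) % 9 else 0) := by
    have e : Nat.add (pack 1048576 fun j => P (Fin.rev j))
        (Nat.mul 1024 (pack 1048576 fun j => Q (Fin.rev j)))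
        = pack 1048576 (fun j => P (Fin.rev j) + 1024 * Q (Fin.rev j)) := by
      rw [← pack_add, ← pack_mul]; rfl
    rw [e, pairSum, digSum_pack]
    · rw [sum_rev (fun j => pairScore (P j + 1024 * Q j)), Finset.mul_sum,
        ← Finset.sum_add_distrib]
      exact Finset.sum_congr rfl fun j _ => pairScore_eq (hP1 j)
    · intro j
      have := hP1 (Fin.rev j)
      have := hQ1 (Fin.rev j)
      omega
  have h12 : (∑ j, if (P j + Q j) % 3 = 0 then 1 else 0) = 12 := by
    rw [← hwc, n0_eq_wt, wt]
    refine Finset.sum_congr rfl fun j _ => ?_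
    by_cases hj : u j = 0
    · rw [if_pos ((hmod j).2 hj), if_neg (hcompl j hj)]
    · rw [if_neg (mt (hmod j).1 hj), if_pos (hbu j hj)]
  have h9 : (∑ j, (if (P j + Q j) % 3 = 0 then (Q j * Q j + 8 * (P j * P j)) % 9 else 0)) % 9
      = 0 := by
    have hf := form_eq_zero (dvd_refl 27) (hP2.add hQ2) hc
    rw [form_ee] at hf
    have hf3 : ∑ j, 3 * (ee j * ((P j : ZMod 27) + Q j) * c j) = 0 := by
      rw [← Finset.mul_sum]
      exact (congrArg (3 * ·) hf).trans (mul_zero 3)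
    rw [Finset.sum_congr rfl fun j _ => pair_coord (ee_nine j) (hP3 j) (hQ3 j) rfl (h j),
      ← Nat.cast_sum, ZMod.natCast_eq_zero_iff] at hf3
    have e : ∀ j, (if (P j + Q j) % 3 = 0 then 3 * ((Q j * Q j + 8 * (P j * P j)) % 9) else 0)
        = 3 * (if (P j + Q j) % 3 = 0 then (Q j * Q j + 8 * (P j * P j)) % 9 else 0) := by
      intro j; split_ifs <;> simp
    rw [Finset.sum_congr rfl fun j _ => e j, ← Finset.mul_sum] at hf3
    omega
  rw [hT, h12] at hok
  revert hok h9
  generalize (∑ j, (if (P j + Q j) % 3 = 0 then (Q j * Q j + 8 * (P j * P j)) % 9 else 0)) = S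
  intro hok h9
  unfold pairOk at hok
  have e1 : Nat.mod (12 + 64 * S) 64 = 12 := by change (12 + 64 * S) % 64 = 12; omega
  have e2 : Nat.div (12 + 64 * S) 64 = S := by change (12 + 64 * S) / 64 = S; omega
  have e3 : Nat.mod S 9 = 0 := h9
  rw [e1, e2, e3] at hok
  exact absurd hok (by decide)

lemma comp_12_12 : comp 12 12 WW = 0 := by
  by_contra h
  obtain ⟨u, c, hu, hc, h1, h2, h3⟩ := exists_of_comp_WW h
  exact no_pair hu hc h1 h2 h3

/-! ### The part divisible by `x₀ y` -/

lemma coeff_comp (i j : ℕ) (P : MvPolynomial (Fin 4) ℂ) (d : Fin 4 →₀ ℕ) :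
    coeff d (comp i j P) = if d 0 = i ∧ d 2 = j then coeff d P else 0 := by
  have hd : Finsupp.weight wts d = (d 0, d 2) := by
    rw [Finsupp.weight_apply, Finsupp.sum_fintype _ _ (by simp), Fin.sum_univ_four]
    simp [wts]
  rw [comp, coeff_weightedHomogeneousComponent, hd]
  simp only [Prod.mk.injEq]

/-- The bidegrees in which `WW` can have a component divisible by `x₀ y`. -/
lemma bidegrees {i j : ℕ} (hi : i ≠ 0) (hj : j ≠ 0) (h : comp i j WW ≠ 0) :
    i = 9 ∧ j = 9 ∨ i = 12 ∧ j = 9 ∨ i = 15 ∧ j = 9 ∨ i = 9 ∧ j = 12 ∨ i = 9 ∧ j = 15 ∨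
      i = 12 ∧ j = 12 := by
  obtain ⟨u, c, hu, hc, h1, h2, h3⟩ := exists_of_comp_WW h
  have hle := wt_add_n0_le h3
  have hr := inCode_red hc
  have a1 := three_dvd_wt hu
  have a2 := three_dvd_wt hr
  have a3 := nine_le_wt hu
  have a4 := nine_le_wt hr
  rw [← n0_eq_wt] at a2 a4
  rw [h2] at a2 a4 hle
  rw [h1] at a1 a3 hle
  have a3' := a3 hj
  have a4' := a4 hi
  clear a3 a4 h1 h2 h3 hu hc hr
  omega

lemma coeff_WW (d : Fin 4 →₀ ℕ) :
    (if d 0 ≠ 0 ∧ d 2 ≠ 0 then coeff d WW else 0)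
      = coeff d (comp 9 9 WW + comp 12 9 WW + comp 9 12 WW) := by
  have h0 : coeff d WW = coeff d (comp (d 0) (d 2) WW) := by
    rw [coeff_comp, if_pos ⟨rfl, rfl⟩]
  rw [coeff_add, coeff_add, coeff_comp, coeff_comp, coeff_comp]
  by_cases hd : d 0 ≠ 0 ∧ d 2 ≠ 0
  · rw [if_pos hd]
    by_cases hc : comp (d 0) (d 2) WW = 0
    · rw [h0, hc]; simp
    · rcases bidegrees hd.1 hd.2 hc with h | h | h | h | h | h <;> obtain ⟨h1, h2⟩ := h <;>
        rw [h1, h2] at hc h0 ⊢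
      · simp
      · simp
      · exact absurd comp_15_9 hc
      · simp
      · exact absurd comp_9_15 hc
      · exact absurd comp_12_12 hc
  · rw [if_neg hd, if_neg (by omega), if_neg (by omega), if_neg (by omega)]
    simp

/-- The valuations `0`, `1`, `2` of a nonzero residue, in terms of its annihilator. -/
lemma padicVal_cases (a : ZMod 27) (ha : a ≠ 0) :
    padicValNat 3 a.val = if 3 * a = 0 then 2 else if 9 * a = 0 then 1 else 0 := by
  have hpos : a.val ≠ 0 := fun h => ha ((ZMod.val_eq_zero a).1 h)
  have hlt : a.val < 27 := ZMod.val_lt a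
  have h3 : 3 * a = 0 ↔ a.val % 9 = 0 := by
    rw [← three_natCast, ZMod.natCast_zmod_val]
  have h9 : 9 * a = 0 ↔ a.val % 3 = 0 := by
    rw [← nine_natCast, ZMod.natCast_zmod_val]
  simp only [h3, h9]
  have key : ∀ n k : ℕ, 3 ^ k ∣ n → ¬ 3 ^ (k + 1) ∣ n → padicValNat 3 n = k := by
    intro n k hk hk'
    have hn : n ≠ 0 := fun h => hk' (h ▸ dvd_zero _)
    have : Fact (Nat.Prime 3) := ⟨Nat.prime_three⟩
    rw [padicValNat_dvd_iff_le hn] at hk hk'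
    omega
  split_ifs with h h'
  · exact key _ 2 (by omega) (by omega)
  · exact key _ 1 (by omega) (by omega)
  · exact key _ 0 (by omega) (by omega)

/-- The image of a term of the symmetrized weight enumerator is a product of `ff`. -/
lemma term_eq (c : Fin 24 → ZMod 27) :
    MvPolynomial.map (algebraMap ℚ ℂ)
      (aeval (![X 0, X 1, X 3 - X 2, X 3 + 2 * X 2] : Fin 4 → MvPolynomial (Fin 4) ℚ)
        ((∏ i : Fin 3, (X (Fin.castSucc i) : MvPolynomial (Fin (3 + 1)) ℚ) ^
          (Finset.univ.filter fun j => c j ≠ 0 ∧ padicValNat 3 (c j).val = (i : ℕ)).card)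
        * (X (Fin.last 3) : MvPolynomial (Fin (3 + 1)) ℚ) ^
            (Finset.univ.filter fun j => c j = 0).card)) = ∏ j, ff (c j) := by
  have hpow : ∀ (x : MvPolynomial (Fin 4) ℂ) (p : Fin 24 → Prop) [DecidablePred p],
      x ^ (Finset.univ.filter p).card = ∏ j, if p j then x else 1 := by
    intro x p _
    rw [← Finset.prod_filter, Finset.prod_const]
  simp only [map_mul, map_pow, aeval_X, Fin.prod_univ_three]
  simp only [hpow, ← Finset.prod_mul_distrib]
  refine Finset.prod_congr rfl fun j _ => ?_
  generalize c j = a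
  by_cases ha : a = 0
  · simp [ha, ff, Fin.last]
  · simp only [ha, ne_eq, not_false_eq_true, true_and, if_false, padicVal_cases a ha, ff]
    by_cases h3 : 3 * a = 0
    · simp [h3]
    · by_cases h9 : 9 * a = 0
      · simp [h3, h9]
      · simp [h3, h9]

lemma map_swe {C : Submodule (ZMod 27) (Fin 24 → ZMod 27)} {p : Equiv.Perm (Fin 24)}
    (hp : ∀ c, c ∈ C ↔ InCode 27 (fun j => c (p j))) :
    MvPolynomial.map (algebraMap ℚ ℂ)
      (aeval (![X 0, X 1, X 3 - X 2, X 3 + 2 * X 2] : Fin 4 → MvPolynomial (Fin 4) ℚ)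
        (swe 3 3 C)) = WW := by
  rw [swe, map_sum, map_sum, WW]
  have h1 : ∀ c : Fin 24 → ZMod 27, MvPolynomial.map (algebraMap ℚ ℂ)
      (aeval (![X 0, X 1, X 3 - X 2, X 3 + 2 * X 2] : Fin 4 → MvPolynomial (Fin 4) ℚ)
        (if c ∈ C then (∏ i : Fin 3, (X (Fin.castSucc i) : MvPolynomial (Fin (3 + 1)) ℚ) ^
          (Finset.univ.filter fun j => c j ≠ 0 ∧ padicValNat 3 (c j).val = (i : ℕ)).card)
        * (X (Fin.last 3) : MvPolynomial (Fin (3 + 1)) ℚ) ^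
            (Finset.univ.filter fun j => c j = 0).card else 0))
      = if InCode 27 (fun j => c (p j)) then ∏ j, ff (c (p j)) else 0 := by
    intro c
    by_cases h : c ∈ C
    · rw [if_pos h, if_pos ((hp c).1 h), term_eq, Equiv.prod_comp p (fun j => ff (c j))]
    · rw [if_neg h, if_neg (mt (hp c).2 h), map_zero, map_zero]
  rw [Finset.sum_congr rfl fun c _ => h1 c]
  have h2 : ∑ c : Fin 24 → ZMod 27, (if InCode 27 c then ∏ j, ff (c j) else 0)
      = ∑ c ∈ Cd, ∏ j, ff (c j) := by
    rw [← Finset.sum_filter]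
    refine Finset.sum_congr ?_ fun _ _ => rfl
    ext c; simp
  rw [← h2]
  exact Equiv.sum_comp (Equiv.arrowCongr p.symm (Equiv.refl (ZMod 27)))
    (fun c : Fin 24 → ZMod 27 => if InCode 27 c then ∏ j, ff (c j) else 0)

lemma coeff_divPart {σ : Type*} (A : MvPolynomial σ ℚ) (i j : σ) (d : σ →₀ ℕ) :
    coeff d (divPart A i j) = if d i ≠ 0 ∧ d j ≠ 0 then coeff d A else 0 := by
  rw [divPart, coeff_sum]
  simp only [coeff_monomial]
  rw [Finset.sum_ite_eq']
  simp only [Finset.mem_filter, mem_support_iff]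
  split_ifs with h1 h2 h2
  · rfl
  · exact absurd h1.2 h2
  · by_contra h
    exact h1 ⟨fun e => h e.symm, h2⟩
  · rfl

/-- The partial weight enumerator `D_{2,1}` for the ternary lifted QR codes of length 24. -/
theorem stmt_15 (g : Polynomial (ZMod 3)) (hg : IsQRFactor 3 g)
    (g3 : Polynomial (ZMod 27)) (C3 : Submodule (ZMod 27) (Fin 24 → ZMod 27))
    (hC3 : IsLiftedQR (by norm_num : (3:ℕ) ∣ 27) g g3 C3) :
    divPart (((3:ℚ) ^ 12)⁻¹ •
        aeval (![X 0, X 1, X 3 - X 2, X 3 + 2 * X 2] : Fin 4 → MvPolynomial (Fin 4) ℚ) (swe 3 3 C3))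
      0 2 =
      72864 * X 0 ^ 9 * X 2 ^ 9 *
        (-(X 1 ^ 2 * X 3 ^ 4) + X 1 ^ 3 * X 3 ^ 3 + X 1 ^ 5 * X 3 - X 1 ^ 6
          - X 0 ^ 3 * X 3 ^ 3 + 3 * X 0 ^ 3 * X 1 * X 3 ^ 2
          - 3 * X 0 ^ 3 * X 1 ^ 2 * X 3 + X 0 ^ 3 * X 1 ^ 3 - X 1 ^ 3 * X 2 ^ 3) := by
  obtain ⟨p, hp⟩ := exists_perm hg hC3
  have hW := map_swe hp
  have hT : comp 9 9 WW + comp 12 9 WW + comp 9 12 WW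
      = MvPolynomial.map (algebraMap ℚ ℂ) (3 ^ 12 * (72864 * X 0 ^ 9 * X 2 ^ 9 *
        (-(X 1 ^ 2 * X 3 ^ 4) + X 1 ^ 3 * X 3 ^ 3 + X 1 ^ 5 * X 3 - X 1 ^ 6
          - X 0 ^ 3 * X 3 ^ 3 + 3 * X 0 ^ 3 * X 1 * X 3 ^ 2
          - 3 * X 0 ^ 3 * X 1 ^ 2 * X 3 + X 0 ^ 3 * X 1 ^ 3 - X 1 ^ 3 * X 2 ^ 3))) := by
    rw [comp_9_9, comp_12_9, comp_9_12]
    simp only [map_mul, map_add, map_sub, map_neg, map_pow, map_ofNat, map_X]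
    ring
  revert hW hT
  generalize aeval (![X 0, X 1, X 3 - X 2, X 3 + 2 * X 2] : Fin 4 → MvPolynomial (Fin 4) ℚ)
    (swe 3 3 C3) = A
  generalize (72864 * X 0 ^ 9 * X 2 ^ 9 *
        (-(X 1 ^ 2 * X 3 ^ 4) + X 1 ^ 3 * X 3 ^ 3 + X 1 ^ 5 * X 3 - X 1 ^ 6
          - X 0 ^ 3 * X 3 ^ 3 + 3 * X 0 ^ 3 * X 1 * X 3 ^ 2
          - 3 * X 0 ^ 3 * X 1 ^ 2 * X 3 + X 0 ^ 3 * X 1 ^ 3 - X 1 ^ 3 * X 2 ^ 3) :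
        MvPolynomial (Fin 4) ℚ) = D
  intro hW hT
  ext d
  have h := coeff_WW d
  have hC : (3 ^ 12 : MvPolynomial (Fin 4) ℚ) = C (3 ^ 12) := by
    rw [map_pow, map_ofNat]
  rw [hT, ← hW, coeff_map, coeff_map, hC, coeff_C_mul] at h
  have h' : (if d 0 ≠ 0 ∧ d 2 ≠ 0 then coeff d A else 0) = 3 ^ 12 * coeff d D := by
    apply (algebraMap ℚ ℂ).injective
    rw [← h]
    split_ifs
    · rfl
    · exact map_zero _
  rw [coeff_divPart, coeff_smul, smul_eq_mul]
  have h3 : ((3 : ℚ) ^ 12) ≠ 0 := by positivity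
  rw [← mul_right_inj' h3, ← h']
  split_ifs
  · rw [mul_inv_cancel_left₀ h3]
  · rw [mul_zero]
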